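/- arXiv:2003.06492 — 2 statements merged into one kernel-verified Lean document; each statement's English description precedes it below -/
import Mathlib

section
/- (Modularity) Let φ be a CTL formula, V ⊆ 𝒜 a set of atoms, and p an atom with p ∉ V. If ψ_1 is a result of forgetting {p} from φ, ψ_2 is a result of forgetting V from ψ_1, and ψ is a result of forgetting {p} ∪ V from φ, then ψ ≡ ψ_2. -/
universe u

/-- A Kripke structure over a set of atoms: a finite nonempty set of states,
a serial transition relation, and a labeling function. -/
structure Kripke (Atom : Type u) where
  State : Type u
  stateFinite : Finite State
  stateNonempty : Nonempty State
  R : State → State → Prop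
  serial : ∀ s, ∃ t, R s t
  L : State → Set Atom

instance {Atom : Type u} (M : Kripke Atom) : Finite M.State := M.stateFinite

/-- A K-structure: a Kripke structure together with one of its states. -/
structure KStruct (Atom : Type u) where
  M : Kripke Atom
  s : M.State

/-- An initial structure: a Kripke structure with an initial state `s0`,
i.e. a state admitting a path visiting every state. -/
structure InitKripke (Atom : Type u) extends Kripke Atom where
  s0 : State
  initial : ∃ π : ℕ → State, π 0 = s0 ∧ (∀ n, R (π n) (π (n + 1))) ∧ ∀ t, ∃ n, π n = t

/-- The (initial) K-structure associated to an initial structure. -/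
def InitKripke.toKS {Atom : Type u} (M : InitKripke Atom) : KStruct Atom :=
  ⟨M.toKripke, M.s0⟩

/-- The approximations `B_n^V` of `V`-bisimilarity on K-structures. -/
def BRel {Atom : Type u} (V : Set Atom) : ℕ → KStruct Atom → KStruct Atom → Prop
  | 0 => fun K1 K2 => K1.M.L K1.s \ V = K2.M.L K2.s \ V
  | n + 1 => fun K1 K2 =>
      K1.M.L K1.s \ V = K2.M.L K2.s \ V ∧
      (∀ t1, K1.M.R K1.s t1 → ∃ t2, K2.M.R K2.s t2 ∧ BRel V n ⟨K1.M, t1⟩ ⟨K2.M, t2⟩) ∧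
      (∀ t2, K2.M.R K2.s t2 → ∃ t1, K1.M.R K1.s t1 ∧ BRel V n ⟨K1.M, t1⟩ ⟨K2.M, t2⟩)

/-- `V`-bisimilarity `K1 ↔_V K2` of K-structures. -/
def VBisim {Atom : Type u} (V : Set Atom) (K1 K2 : KStruct Atom) : Prop :=
  ∀ n, BRel V n K1 K2

/-- CTL formulas in existential normal form. -/
inductive CTL (Atom : Type u) : Type u
  | bot  : CTL Atom
  | top  : CTL Atom
  | atom (p : Atom) : CTL Atom
  | neg  (φ : CTL Atom) : CTL Atom
  | or   (φ ψ : CTL Atom) : CTL Atom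
  | EX   (φ : CTL Atom) : CTL Atom
  | EG   (φ : CTL Atom) : CTL Atom
  | EU   (φ ψ : CTL Atom) : CTL Atom

namespace CTL
variable {Atom : Type u}

def and (φ ψ : CTL Atom) : CTL Atom := .neg (.or (.neg φ) (.neg ψ))
def imp (φ ψ : CTL Atom) : CTL Atom := .or (.neg φ) ψ
def iff (φ ψ : CTL Atom) : CTL Atom := (φ.imp ψ).and (ψ.imp φ)
def AX (φ : CTL Atom) : CTL Atom := .neg (.EX (.neg φ))
def EF (φ : CTL Atom) : CTL Atom := .EU .top φ
def AF (φ : CTL Atom) : CTL Atom := .neg (.EG (.neg φ))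
def AG (φ : CTL Atom) : CTL Atom := .neg (.EU .top (.neg φ))

/-- The set of atoms occurring in a formula. -/
def vars : CTL Atom → Set Atom
  | .bot => ∅
  | .top => ∅
  | .atom p => {p}
  | .neg φ => vars φ
  | .or φ ψ => vars φ ∪ vars ψ
  | .EX φ => vars φ
  | .EG φ => vars φ
  | .EU φ ψ => vars φ ∪ vars ψ

end CTL

/-- The standard CTL satisfaction relation `(M,s) ⊨ φ`. -/
def Sat {Atom : Type u} (M : Kripke Atom) : CTL Atom → M.State → Prop
  | .bot => fun _ => False
  | .top => fun _ => True
  | .atom p => fun s => p ∈ M.L s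
  | .neg φ => fun s => ¬ Sat M φ s
  | .or φ ψ => fun s => Sat M φ s ∨ Sat M ψ s
  | .EX φ => fun s => ∃ t, M.R s t ∧ Sat M φ t
  | .EG φ => fun s => ∃ π : ℕ → M.State, π 0 = s ∧ (∀ n, M.R (π n) (π (n + 1))) ∧
      ∀ n, Sat M φ (π n)
  | .EU φ ψ => fun s => ∃ π : ℕ → M.State, π 0 = s ∧ (∀ n, M.R (π n) (π (n + 1))) ∧
      ∃ i, Sat M ψ (π i) ∧ ∀ j < i, Sat M φ (π j)

/-- Satisfaction for K-structures. -/
def KSat {Atom : Type u} (K : KStruct Atom) (φ : CTL Atom) : Prop := Sat K.M φ K.s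

/-- The set of models (initial K-structures) of a formula. -/
def CTLMod {Atom : Type u} (φ : CTL Atom) : Set (InitKripke Atom) :=
  {M | Sat M.toKripke φ M.s0}

def Entails {Atom : Type u} (φ ψ : CTL Atom) : Prop := CTLMod φ ⊆ CTLMod ψ

def CTLEquiv {Atom : Type u} (φ ψ : CTL Atom) : Prop := CTLMod φ = CTLMod ψ

/-- `IR φ V`: φ is irrelevant to the atoms in V. -/
def IR {Atom : Type u} (φ : CTL Atom) (V : Set Atom) : Prop :=
  ∃ ψ : CTL Atom, CTL.vars ψ ∩ V = ∅ ∧ CTLEquiv φ ψ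

/-- `V`-bisimilarity of depth-`n` computation trees rooted at `s1` (in `M1`) and `s2` (in `M2`). -/
def TreeBisim {Atom : Type u} (V : Set Atom) (M1 M2 : Kripke Atom) :
    ℕ → M1.State → M2.State → Prop
  | 0 => fun s1 s2 => M1.L s1 \ V = M2.L s2 \ V
  | n + 1 => fun s1 s2 =>
      M1.L s1 \ V = M2.L s2 \ V ∧
      (∀ t1, M1.R s1 t1 → ∃ t2, M2.R s2 t2 ∧ TreeBisim V M1 M2 n t1 t2) ∧
      (∀ t2, M2.R s2 t2 → ∃ t1, M1.R s1 t1 ∧ TreeBisim V M1 M2 n t1 t2)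

/-- Finite conjunction of a list of formulas. -/
def andList {Atom : Type u} : List (CTL Atom) → CTL Atom
  | [] => .top
  | φ :: l => φ.and (andList l)

/-- Finite disjunction of a list of formulas. -/
def orList {Atom : Type u} : List (CTL Atom) → CTL Atom
  | [] => .bot
  | φ :: l => .or φ (orList l)

/-- A list enumerating a subset of a finite type. -/
noncomputable def setToList {α : Type u} [Finite α] (s : Set α) : List α :=
  s.toFinite.toFinset.toList

/-- The list of `R`-successors of a state. -/
noncomputable def Kripke.succList {Atom : Type u} (M : Kripke Atom) (s : M.State) :
    List M.State :=
  setToList {t | M.R s t}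

/-- The characterizing formula `F_V(Tr_0(s))` of the depth-0 computation tree. -/
noncomputable def charTree0 {Atom : Type u} [Finite Atom] (M : Kripke Atom) (V : Set Atom)
    (s : M.State) : CTL Atom :=
  (andList ((setToList (V ∩ M.L s)).map CTL.atom)).and
    (andList ((setToList (V \ M.L s)).map fun q => CTL.neg (CTL.atom q)))

/-- The characterizing formula `F_V(Tr_n(s))` of the depth-`n` computation tree of `s`. -/
noncomputable def charTree {Atom : Type u} [Finite Atom] (M : Kripke Atom) (V : Set Atom) :
    ℕ → M.State → CTL Atom
  | 0 => fun s => charTree0 M V s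
  | k + 1 => fun s =>
      (andList ((M.succList s).map fun t => CTL.EX (charTree M V k t))).and
        ((CTL.AX (orList ((M.succList s).map (charTree M V k)))).and (charTree0 M V s))

/-- `dis_V(M,s,s',k)`: `s` and `s'` are `V`-distinguishable, and `k` is the least depth at which
their computation trees fail to be `(𝒜∖V)`-bisimilar. -/
def dis {Atom : Type u} (M : Kripke Atom) (V : Set Atom) (s s' : M.State) (k : ℕ) : Prop :=
  ¬ VBisim Vᶜ ⟨M, s⟩ ⟨M, s'⟩ ∧
  IsLeast {n | ¬ TreeBisim Vᶜ M M n s s'} k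

/-- The characterization number `ch(M,V)`. -/
noncomputable def ch {Atom : Type u} (M : Kripke Atom) (V : Set Atom) : ℕ :=
  letI := Classical.dec (∃ s s' k, dis M V s s' k)
  if ∃ s s' k, dis M V s s' k then
    sSup {k | ∃ s s', dis M V s s' k}
  else
    sInf {k | (fun s s' : M.State => BRel Vᶜ k ⟨M, s⟩ ⟨M, s'⟩) =
              (fun s s' : M.State => BRel Vᶜ (k + 1) ⟨M, s⟩ ⟨M, s'⟩)}

/-- The characterizing formula `F_V(M,s0)` of an initial K-structure on `V`. -/
noncomputable def charForm {Atom : Type u} [Finite Atom] (M : InitKripke Atom) (V : Set Atom) :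
    CTL Atom :=
  let T : M.State → CTL Atom := fun s => charTree M.toKripke V (ch M.toKripke V) s
  (T M.s0).and
    (andList ((setToList (Set.univ : Set M.State)).map fun s =>
      CTL.AG ((T s).imp
        ((andList ((M.toKripke.succList s).map fun t => CTL.EX (T t))).and
          (CTL.AX (orList ((M.toKripke.succList s).map T)))))))

/-- `ψ` is a result of forgetting `V` from `φ`. -/
def IsForget {Atom : Type u} (φ : CTL Atom) (V : Set Atom) (ψ : CTL Atom) : Prop :=
  CTL.vars ψ ∩ V = ∅ ∧
  CTLMod ψ = {K : InitKripke Atom | ∃ K' ∈ CTLMod φ, VBisim V K'.toKS K.toKS}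


/-! ### Basic facts on bisimilarity -/

theorem BRel_label {Atom : Type u} {V : Set Atom} {n : ℕ} {A B : KStruct Atom}
    (h : BRel V n A B) : A.M.L A.s \ V = B.M.L B.s \ V := by
  cases n with
  | zero => exact h
  | succ n => exact h.1

theorem BRel_refl {Atom : Type u} (V : Set Atom) (n : ℕ) : ∀ A : KStruct Atom, BRel V n A A := by
  induction n with
  | zero => intro A; rfl
  | succ n ih =>
    intro A
    exact ⟨rfl, fun t ht => ⟨t, ht, ih _⟩, fun t ht => ⟨t, ht, ih _⟩⟩

theorem BRel_symm {Atom : Type u} (V : Set Atom) (n : ℕ) :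
    ∀ A B : KStruct Atom, BRel V n A B → BRel V n B A := by
  induction n with
  | zero => intro A B h; exact Eq.symm h
  | succ n ih =>
    rintro A B ⟨h1, h2, h3⟩
    refine ⟨h1.symm, fun t ht => ?_, fun t ht => ?_⟩
    · obtain ⟨t', ht', hb⟩ := h3 t ht
      exact ⟨t', ht', ih _ _ hb⟩
    · obtain ⟨t', ht', hb⟩ := h2 t ht
      exact ⟨t', ht', ih _ _ hb⟩

theorem diff_union_trans {α : Type u} {V1 V2 X Y Z : Set α} (h1 : X \ V1 = Y \ V1)
    (h2 : Y \ V2 = Z \ V2) : X \ (V1 ∪ V2) = Z \ (V1 ∪ V2) := by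
  ext q
  have e1 := Set.ext_iff.1 h1 q
  have e2 := Set.ext_iff.1 h2 q
  simp only [Set.mem_sdiff, Set.mem_union] at *
  tauto

theorem BRel_trans {Atom : Type u} (V1 V2 : Set Atom) (n : ℕ) :
    ∀ A B C : KStruct Atom, BRel V1 n A B → BRel V2 n B C → BRel (V1 ∪ V2) n A C := by
  induction n with
  | zero => intro A B C h1 h2; exact diff_union_trans h1 h2
  | succ n ih =>
    rintro A B C ⟨h1, h2, h3⟩ ⟨k1, k2, k3⟩
    refine ⟨diff_union_trans h1 k1, fun t ht => ?_, fun t ht => ?_⟩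
    · obtain ⟨t', ht', hb⟩ := h2 t ht
      obtain ⟨t'', ht'', hb'⟩ := k2 t' ht'
      exact ⟨t'', ht'', ih _ _ _ hb hb'⟩
    · obtain ⟨t', ht', hb⟩ := k3 t ht
      obtain ⟨t'', ht'', hb'⟩ := h3 t' ht'
      exact ⟨t'', ht'', ih _ _ _ hb' hb⟩

theorem BRel_pred {Atom : Type u} (V : Set Atom) (n : ℕ) :
    ∀ A B : KStruct Atom, BRel V (n + 1) A B → BRel V n A B := by
  induction n with
  | zero => intro A B h; exact h.1
  | succ n ih =>
    rintro A B ⟨h1, h2, h3⟩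
    refine ⟨h1, fun t ht => ?_, fun t ht => ?_⟩
    · obtain ⟨t', ht', hb⟩ := h2 t ht
      exact ⟨t', ht', ih _ _ hb⟩
    · obtain ⟨t', ht', hb⟩ := h3 t ht
      exact ⟨t', ht', ih _ _ hb⟩

theorem BRel_mono {Atom : Type u} (V : Set Atom) {n m : ℕ} (h : n ≤ m) {A B : KStruct Atom}
    (hb : BRel V m A B) : BRel V n A B := by
  induction m, h using Nat.le_induction with
  | base => exact hb
  | succ m _ ih => exact ih (BRel_pred V m _ _ hb)

theorem VBisim.refl {Atom : Type u} (V : Set Atom) (A : KStruct Atom) : VBisim V A A :=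
  fun n => BRel_refl V n A

theorem VBisim.symm {Atom : Type u} {V : Set Atom} {A B : KStruct Atom} (h : VBisim V A B) :
    VBisim V B A := fun n => BRel_symm V n _ _ (h n)

theorem VBisim.trans' {Atom : Type u} {V1 V2 : Set Atom} {A B C : KStruct Atom}
    (h : VBisim V1 A B) (k : VBisim V2 B C) : VBisim (V1 ∪ V2) A C :=
  fun n => BRel_trans V1 V2 n _ _ _ (h n) (k n)

theorem VBisim.trans {Atom : Type u} {V : Set Atom} {A B C : KStruct Atom}
    (h : VBisim V A B) (k : VBisim V B C) : VBisim V A C := by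
  have := VBisim.trans' h k
  rwa [Set.union_self] at this

theorem VBisim.label {Atom : Type u} {V : Set Atom} {A B : KStruct Atom} (h : VBisim V A B) :
    A.M.L A.s \ V = B.M.L B.s \ V := h 0

/-- Limits of approximations: successors match up to full bisimilarity. -/
theorem VBisim.forth {Atom : Type u} {V : Set Atom} {A B : Kripke Atom} {s : A.State} {t : B.State}
    (h : VBisim V ⟨A, s⟩ ⟨B, t⟩) {s' : A.State} (hs : A.R s s') :
    ∃ t', B.R t t' ∧ VBisim V ⟨A, s'⟩ ⟨B, t'⟩ := by
  have h1 : ∀ n, ∃ t', B.R t t' ∧ BRel V n ⟨A, s'⟩ ⟨B, t'⟩ := fun n => (h (n + 1)).2.1 s' hs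
  choose f hf1 hf2 using h1
  obtain ⟨t', ht'⟩ := Finite.exists_infinite_fiber f
  have hinf : (f ⁻¹' {t'}).Infinite := Set.infinite_coe_iff.1 ht'
  obtain ⟨m0, hm0⟩ := hinf.nonempty
  refine ⟨t', ?_, fun n => ?_⟩
  · have := hf1 m0
    rwa [hm0] at this
  · obtain ⟨m, hm, hnm⟩ := hinf.exists_gt n
    have := hf2 m
    rw [hm] at this
    exact BRel_mono V hnm.le this

theorem VBisim.back {Atom : Type u} {V : Set Atom} {A B : Kripke Atom} {s : A.State} {t : B.State}
    (h : VBisim V ⟨A, s⟩ ⟨B, t⟩) {t' : B.State} (hs : B.R t t') :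
    ∃ s', A.R s s' ∧ VBisim V ⟨A, s'⟩ ⟨B, t'⟩ := by
  obtain ⟨s', h1, h2⟩ := h.symm.forth hs
  exact ⟨s', h1, h2.symm⟩

theorem VBisim.of_rel {Atom : Type u} {V : Set Atom} {A B : Kripke Atom}
    (Z : A.State → B.State → Prop)
    (hl : ∀ s t, Z s t → A.L s \ V = B.L t \ V)
    (hf : ∀ s t s', Z s t → A.R s s' → ∃ t', B.R t t' ∧ Z s' t')
    (hb : ∀ s t t', Z s t → B.R t t' → ∃ s', A.R s s' ∧ Z s' t')
    {s : A.State} {t : B.State} (h : Z s t) : VBisim V ⟨A, s⟩ ⟨B, t⟩ := by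
  intro n
  induction n generalizing s t with
  | zero => exact hl s t h
  | succ n ih =>
    refine ⟨hl s t h, fun s' hs => ?_, fun t' ht => ?_⟩
    · obtain ⟨t', h1, h2⟩ := hf s t s' h hs
      exact ⟨t', h1, ih h2⟩
    · obtain ⟨s', h1, h2⟩ := hb s t t' h ht
      exact ⟨s', h1, ih h2⟩

/-- The setoid of `W`-bisimilarity. -/
def bsSetoid {Atom : Type u} (W : Set Atom) : Setoid (KStruct Atom) where
  r := VBisim W
  iseqv := ⟨VBisim.refl W, VBisim.symm, VBisim.trans⟩

/-- Bisimilarity types. -/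
def QT {Atom : Type u} (W : Set Atom) : Type (u + 1) := Quotient (bsSetoid W)

/-- The bisimilarity type of a state. -/
def tp {Atom : Type u} (W : Set Atom) (K : Kripke Atom) (s : K.State) : QT W :=
  Quotient.mk (bsSetoid W) ⟨K, s⟩

theorem tp_eq {Atom : Type u} {W : Set Atom} {A B : Kripke Atom} {s : A.State} {t : B.State} :
    tp W A s = tp W B t ↔ VBisim W ⟨A, s⟩ ⟨B, t⟩ :=
  ⟨fun h => Quotient.exact h, fun h => Quotient.sound (s := bsSetoid W) h⟩

theorem tp_step {Atom : Type u} {W : Set Atom} {A B : Kripke Atom} {s : A.State} {t : B.State}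
    (h : tp W A s = tp W B t) {s' : A.State} (hs : A.R s s') :
    ∃ t', B.R t t' ∧ tp W B t' = tp W A s' := by
  obtain ⟨t', h1, h2⟩ := (tp_eq.1 h).forth hs
  exact ⟨t', h1, tp_eq.2 h2.symm⟩

/-! ### Paths, reachability, initial states -/

/-- From `a` there is a path visiting all of `l`. -/
def PathVia {S : Type u} (R : S → S → Prop) (a : S) (l : List S) : Prop :=
  ∃ π : ℕ → S, π 0 = a ∧ (∀ n, R (π n) (π (n + 1))) ∧ ∀ t ∈ l, ∃ n, π n = t

theorem PathVia.cons {S : Type u} {R : S → S → Prop} {a b : S} {l : List S} (hab : R a b)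
    (h : PathVia R b l) : PathVia R a (a :: l) := by
  obtain ⟨π, h0, h1, h2⟩ := h
  refine ⟨fun n => Nat.casesOn n a π, rfl, ?_, ?_⟩
  · rintro (_ | n)
    · simpa [h0] using hab
    · exact h1 n
  · intro t ht
    rcases List.mem_cons.1 ht with rfl | ht
    · exact ⟨0, rfl⟩
    · obtain ⟨n, hn⟩ := h2 t ht
      exact ⟨n + 1, hn⟩

theorem PathVia.self {S : Type u} {R : S → S → Prop} {a : S} {l : List S}
    (h : PathVia R a l) : PathVia R a (a :: l) := by
  obtain ⟨π, h0, h1, h2⟩ := h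
  refine ⟨π, h0, h1, fun t ht => ?_⟩
  rcases List.mem_cons.1 ht with rfl | ht
  · exact ⟨0, h0⟩
  · exact h2 t ht

theorem PathVia.mono {S : Type u} {R : S → S → Prop} {a : S} {l l' : List S}
    (h : PathVia R a l) (hl : ∀ x ∈ l', x ∈ l) : PathVia R a l' := by
  obtain ⟨π, h0, h1, h2⟩ := h
  exact ⟨π, h0, h1, fun t ht => h2 t (hl t ht)⟩

theorem PathVia.reach {S : Type u} {R : S → S → Prop} {a b : S} {l : List S}
    (hab : Relation.ReflTransGen R a b) (h : PathVia R b l) : PathVia R a (a :: l) := by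
  induction hab using Relation.ReflTransGen.head_induction_on with
  | refl => exact h.self
  | head h1 _ ih => exact (PathVia.cons h1 ih).mono (by simp +contextual)

theorem PathVia.nil {S : Type u} {R : S → S → Prop} (hs : ∀ s, ∃ t, R s t) (a : S) :
    PathVia R a [] := by
  choose f hf using hs
  exact ⟨fun n => f^[n] a, rfl, fun n => by
    simp only [Function.iterate_succ_apply']; exact hf _, by simp⟩

theorem PathVia.sorted {S : Type u} {R : S → S → Prop} (hs : ∀ s, ∃ t, R s t) (l : List S) :
    ∀ a, (∀ x ∈ l, Relation.ReflTransGen R a x) →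
      l.Pairwise (Relation.ReflTransGen R) → PathVia R a (a :: l) := by
  induction l with
  | nil => intro a _ _; exact (PathVia.nil hs a).self
  | cons b l ih =>
    intro a ha hp
    rw [List.pairwise_cons] at hp
    exact PathVia.reach (ha b (by simp)) (ih b hp.1 hp.2)

open Classical in
theorem exists_path_all {S : Type u} [Finite S] {R : S → S → Prop} (hs : ∀ s, ∃ t, R s t) (a : S)
    (ha : ∀ x, Relation.ReflTransGen R a x)
    (ht : ∀ x y, Relation.ReflTransGen R x y ∨ Relation.ReflTransGen R y x) :
    ∃ π : ℕ → S, π 0 = a ∧ (∀ n, R (π n) (π (n + 1))) ∧ ∀ t, ∃ n, π n = t := by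
  have : Fintype S := Fintype.ofFinite S
  let l := (Finset.univ : Finset S).toList
  let l' := l.insertionSort (Relation.ReflTransGen R)
  have : Std.Total (Relation.ReflTransGen R) := ⟨ht⟩
  have hp : l'.Pairwise (Relation.ReflTransGen R) := List.pairwise_insertionSort _ _
  obtain ⟨π, h0, h1, h2⟩ := PathVia.sorted hs l' a (fun x _ => ha x) hp
  refine ⟨π, h0, h1, fun t => h2 t ?_⟩
  refine List.mem_cons_of_mem _ ?_
  rw [List.mem_insertionSort]
  simp [l]

theorem path_reach {S : Type u} {R : S → S → Prop} {π : ℕ → S} (h : ∀ n, R (π n) (π (n + 1)))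
    {i j : ℕ} (hij : i ≤ j) : Relation.ReflTransGen R (π i) (π j) := by
  induction j, hij using Nat.le_induction with
  | base => exact .refl
  | succ j _ ih => exact ih.tail (h j)

theorem InitKripke.reach {Atom : Type u} (K : InitKripke Atom) (x : K.State) :
    Relation.ReflTransGen K.R K.s0 x := by
  obtain ⟨π, h0, h1, h2⟩ := K.initial
  obtain ⟨n, rfl⟩ := h2 x
  rw [← h0]
  exact path_reach h1 (Nat.zero_le n)

theorem InitKripke.total {Atom : Type u} (K : InitKripke Atom) (x y : K.State) :
    Relation.ReflTransGen K.R x y ∨ Relation.ReflTransGen K.R y x := by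
  obtain ⟨π, h0, h1, h2⟩ := K.initial
  obtain ⟨n, rfl⟩ := h2 x
  obtain ⟨m, rfl⟩ := h2 y
  rcases le_total n m with h | h
  · exact Or.inl (path_reach h1 h)
  · exact Or.inr (path_reach h1 h)

/-! ### Periodic backward walks -/

/-- A closed walk from a transitive closure cycle, indexed backwards. -/
theorem exists_finwalk {S : Type u} {R : S → S → Prop} {a b : S} (h : Relation.TransGen R a b) :
    ∃ (j : ℕ) (w : ℕ → S), 0 < j ∧ w j = a ∧ w 0 = b ∧ ∀ n < j, R (w (n + 1)) (w n) := by
  induction h using Relation.TransGen.head_induction_on with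
  | @single a h =>
    refine ⟨1, fun n => if n = 0 then b else a, one_pos, by simp, by simp, ?_⟩
    intro n hn
    have : n = 0 := by omega
    subst this
    simpa using h
  | @head a c h _ ih =>
    obtain ⟨j, w, hj, hw, h0, hR⟩ := ih
    refine ⟨j + 1, fun n => if n = j + 1 then a else w n, by omega, by simp, ?_, ?_⟩
    · have : (0 : ℕ) ≠ j + 1 := by omega
      simp [h0]
    · intro n hn
      by_cases hnj : n = j
      · subst hnj
        simpa [hw] using h
      · have h1 : n ≠ j + 1 := by omega
        simp only [h1, if_false, Nat.add_right_cancel_iff, hnj]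
        exact hR n (by omega)

theorem periodize {S : Type u} {R : S → S → Prop} {j : ℕ} (hj : 0 < j) {w : ℕ → S}
    (h0 : w j = w 0) (hR : ∀ n < j, R (w (n + 1)) (w n)) (n : ℕ) :
    R (w ((n + 1) % j)) (w (n % j)) := by
  have h1 : n % j < j := Nat.mod_lt _ hj
  have h2 := hR _ h1
  rcases Nat.lt_or_ge (n % j + 1) j with h | h
  · have : (n + 1) % j = n % j + 1 := by
      rw [Nat.add_mod]
      rcases Nat.lt_or_ge 1 j with h3 | h3
      · rw [Nat.mod_eq_of_lt h3, Nat.mod_eq_of_lt h]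
      · omega
    rwa [this]
  · have e : n % j + 1 = j := by omega
    have : (n + 1) % j = 0 := by
      rw [Nat.add_mod_eq_ite]
      rcases Nat.lt_or_ge 1 j with h3 | h3
      · rw [Nat.mod_eq_of_lt h3, e]; simp
      · have : j = 1 := by omega
        subst this
        have h5 := Nat.mod_one n
        simp [h5]
    rw [e, h0] at h2
    rwa [this]

theorem exists_period {S : Type u} [Finite S] (R : S → S → Prop) :
    ∃ l0 : ℕ, 0 < l0 ∧ ∀ u, Relation.TransGen R u u → ∃ w : ℕ → S, w 0 = u ∧
      (∀ n, R (w (n + 1)) (w n)) ∧ ∀ n, w (n + l0) = w n := by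
  classical
  have : Fintype S := Fintype.ofFinite S
  have key : ∀ u, ∃ j : ℕ, 0 < j ∧ (Relation.TransGen R u u → ∃ w : ℕ → S, w 0 = u ∧
      (∀ n, R (w (n + 1)) (w n)) ∧ ∀ n, w (n + j) = w n) := by
    intro u
    by_cases h : Relation.TransGen R u u
    · obtain ⟨j, w, hj, hw, h0, hR⟩ := exists_finwalk h
      refine ⟨j, hj, fun _ => ⟨fun n => w (n % j), by simpa using h0, ?_, ?_⟩⟩
      · exact periodize hj (hw.trans h0.symm) hR
      · intro n; simp
    · exact ⟨1, one_pos, fun h' => absurd h' h⟩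
  choose j hj hw using key
  refine ⟨∏ u, j u, Finset.prod_pos fun u _ => hj u, fun u hu => ?_⟩
  obtain ⟨w, h1, h2, h3⟩ := hw u hu
  refine ⟨w, h1, h2, ?_⟩
  obtain ⟨k, hk⟩ := Finset.dvd_prod_of_mem j (Finset.mem_univ u)
  have hp : Function.Periodic w (j u) := h3
  have := hp.nat_mul k
  rw [hk]
  intro n
  rw [mul_comm]
  exact this n

/-! ### The gadget construction -/

/-- Backward-indexed closed walks of period `l` whose type sequence has period `l0`. -/
@[ext]
structure Cyc {Atom : Type u} (W : Set Atom) (K : Kripke Atom) (l0 l : ℕ) where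
  c : ℕ → K.State
  step : ∀ n, K.R (c (n + 1)) (c n)
  per : ∀ n, c (n + l) = c n
  tper : ∀ n, tp W K (c (n + l0)) = tp W K (c n)

theorem Cyc.per_mul {Atom : Type u} {W : Set Atom} {K : Kripke Atom} {l0 l : ℕ}
    (c : Cyc W K l0 l) (n k : ℕ) : c.c (n + l * k) = c.c n := by
  have hp : Function.Periodic c.c l := c.per
  have := hp.nat_mul k n
  rwa [Nat.cast_id, mul_comm] at this

theorem Cyc.per_dvd {Atom : Type u} {W : Set Atom} {K : Kripke Atom} {l0 l : ℕ}
    (c : Cyc W K l0 l) {m : ℕ} (h : l ∣ m) : c.c m = c.c 0 := by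
  obtain ⟨k, rfl⟩ := h
  simpa using c.per_mul 0 k

theorem Cyc.per_mod {Atom : Type u} {W : Set Atom} {K : Kripke Atom} {l0 l : ℕ}
    (c : Cyc W K l0 l) (m : ℕ) : c.c (m % l) = c.c m := by
  have := c.per_mul (m % l) (m / l)
  rwa [Nat.mod_add_div, eq_comm] at this

theorem Cyc.tper_mul {Atom : Type u} {W : Set Atom} {K : Kripke Atom} {l0 l : ℕ}
    (c : Cyc W K l0 l) (n k : ℕ) : tp W K (c.c (n + l0 * k)) = tp W K (c.c n) := by
  have hp : Function.Periodic (fun n => tp W K (c.c n)) l0 := c.tper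
  have := hp.nat_mul k n
  rwa [Nat.cast_id, mul_comm] at this

theorem Cyc.finite {Atom : Type u} {W : Set Atom} {K : Kripke Atom} {l0 l : ℕ} (hl : 0 < l) :
    Finite (Cyc W K l0 l) := by
  refine Finite.of_injective (β := Fin l → K.State) (fun c i => c.c i) ?_
  intro c c' h
  ext n
  have := congrFun h ⟨n % l, Nat.mod_lt _ hl⟩
  simpa [Cyc.per_mod] using this

/-- Parameters of the gadget construction. -/
structure GP {Atom : Type u} (W : Set Atom) (K : Kripke Atom) (l0 l D M : ℕ) where
  g : Cyc W K l0 l → ℕ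
  inj : Function.Injective g
  dvd : ∀ c, l ∣ g c
  ge : ∀ c, l * (D + 3) ≤ g c
  lt : ∀ c, g c < M
  hl0 : 0 < l0
  hl : 0 < l
  dl : l0 ∣ l
  dM : l ∣ M
  hM : l * (D + 3) ≤ M

/-- Length of one of the two segments of a gadget. -/
def GP.len {Atom : Type u} {W : Set Atom} {K : Kripke Atom} {l0 l D M : ℕ}
    (P : GP W K l0 l D M) (c : Cyc W K l0 l) (b : Bool) : ℕ := if b then M else P.g c

/-- States of the gadget structure. -/
inductive GS {Atom : Type u} {W : Set Atom} {K : Kripke Atom} {l0 l D M : ℕ}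
    (P : GP W K l0 l D M) : Type u
  | base (s : K.State) : GS P
  | cyc (c : Cyc W K l0 l) (b : Bool) (r : ℕ) (h : r < P.len c b) : GS P

section gadget

variable {Atom : Type u} {W : Set Atom} {K : Kripke Atom} {l0 l D M : ℕ} {P : GP W K l0 l D M}

/-- Underlying state. -/
def GS.bs : GS P → K.State
  | .base s => s
  | .cyc c _ r _ => c.c r

/-- Distance to the next pulse. -/
def GS.rem : GS P → ℕ
  | .base _ => M
  | .cyc _ _ r _ => r

/-- Transitions of the gadget structure. -/
def GR : GS P → GS P → Prop
  | .base s, .base t => K.R s t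
  | .base s, .cyc c b r _ => s = c.c 0 ∧ b = true ∧ r + 1 = M
  | .cyc c _ r _, .base t => K.R (c.c r) t
  | .cyc c b r _, .cyc c' b' r' _ =>
      c = c' ∧ ((b = b' ∧ r = r' + 1) ∨ (r = 0 ∧ b' = !b ∧ r' + 1 = P.len c' b'))

theorem GP.len_dvd (P : GP W K l0 l D M) (c : Cyc W K l0 l) (b : Bool) : l ∣ P.len c b := by
  cases b
  · exact P.dvd c
  · exact P.dM

theorem GP.len_ge (P : GP W K l0 l D M) (c : Cyc W K l0 l) (b : Bool) :
    l * (D + 3) ≤ P.len c b := by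
  cases b
  · exact P.ge c
  · exact P.hM

theorem GP.len_le (P : GP W K l0 l D M) (c : Cyc W K l0 l) (b : Bool) :
    P.len c b ≤ M := by
  cases b
  · exact (P.lt c).le
  · exact le_rfl

theorem GP.len_pos (P : GP W K l0 l D M) (c : Cyc W K l0 l) (b : Bool) : 0 < P.len c b :=
  lt_of_lt_of_le (Nat.mul_pos P.hl (by omega)) (P.len_ge c b)

theorem GP.M_pos (P : GP W K l0 l D M) : 0 < M :=
  lt_of_lt_of_le (Nat.mul_pos P.hl (by omega)) P.hM

theorem GR.bs {a e : GS P} (h : GR a e) : K.R a.bs e.bs := by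
  cases a with
  | base s =>
    cases e with
    | base t => exact h
    | cyc c b r hr =>
      obtain ⟨rfl, rfl, hM⟩ := h
      have := c.step r
      rw [hM, c.per_dvd P.dM] at this
      exact this
  | cyc c b r hr =>
    cases e with
    | base t => exact h
    | cyc c' b' r' hr' =>
      obtain ⟨rfl, ⟨rfl, rfl⟩ | ⟨rfl, rfl, h⟩⟩ := h
      · exact c.step r'
      · have := c.step r'
        rw [h, c.per_dvd (P.len_dvd _ _)] at this
        exact this

theorem GR.to_base {a : GS P} {t : K.State} (h : K.R a.bs t) : GR a (.base t) := by
  cases a <;> exact h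

theorem GR.rem_le {a e : GS P} (h : GR a e) : a.rem ≤ e.rem + 1 := by
  cases a with
  | base s =>
    cases e with
    | base t => exact Nat.le_succ _
    | cyc c b r hr => exact h.2.2.ge
  | cyc c b r hr =>
    cases e with
    | base t =>
      have := P.len_le c b
      simp only [GS.rem]; omega
    | cyc c' b' r' hr' =>
      obtain ⟨rfl, ⟨rfl, rfl⟩ | ⟨rfl, rfl, h⟩⟩ := h
      · exact le_rfl
      · exact Nat.zero_le _

theorem GS.finite (P : GP W K l0 l D M) : Finite (GS P) := by
  have := Cyc.finite (W := W) (K := K) (l0 := l0) P.hl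
  refine Finite.of_injective (β := K.State ⊕ (Cyc W K l0 l × Bool × Fin M))
    (fun a => match a with
      | .base s => .inl s
      | .cyc c b r h => .inr (c, b, ⟨r, lt_of_lt_of_le h (P.len_le c b)⟩)) ?_
  intro a b h
  cases a <;> cases b <;> simp_all

/-- The gadget Kripke structure. -/
def GK (P : GP W K l0 l D M) (p : Atom) : Kripke Atom where
  State := GS P
  stateFinite := GS.finite P
  stateNonempty := K.stateNonempty.map GS.base
  R := GR
  serial := fun a => by
    obtain ⟨t, ht⟩ := K.serial a.bs
    exact ⟨.base t, GR.to_base ht⟩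
  L := fun a => {q | (q ∈ K.L a.bs ∧ q ≠ p) ∨ (q = p ∧ a.rem = 0)}

theorem GK.bisim (P : GP W K l0 l D M) (p : Atom) (a : GS P) :
    VBisim {p} ⟨GK P p, a⟩ ⟨K, a.bs⟩ := by
  refine VBisim.of_rel (A := GK P p) (B := K) (fun a s => GS.bs a = s) ?_ ?_ ?_ rfl
  · rintro a s rfl
    ext q
    simp [GK]
    tauto
  · rintro a s b rfl h
    exact ⟨_, GR.bs h, rfl⟩
  · rintro a s t rfl h
    exact ⟨.base t, GR.to_base h, rfl⟩

/-! #### Reachability -/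

theorem GR.base_reach {s t : K.State} (h : Relation.ReflTransGen K.R s t) :
    Relation.ReflTransGen (GR (P := P)) (.base s) (.base t) := by
  induction h with
  | refl => exact .refl
  | tail _ h ih => exact ih.tail h

theorem GR.down (c : Cyc W K l0 l) (b : Bool) {r : ℕ} (hr : r < P.len c b) (k : ℕ) :
    ∀ hk : r + k < P.len c b,
      Relation.ReflTransGen (GR (P := P)) (.cyc c b (r + k) hk) (.cyc c b r hr) := by
  induction k with
  | zero => intro _; exact .refl
  | succ k ih =>
    intro hk
    have h1 : GR (P := P) (.cyc c b (r + (k + 1)) hk) (.cyc c b (r + k) (by omega)) :=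
      ⟨rfl, Or.inl ⟨rfl, rfl⟩⟩
    exact .head h1 (ih _)

theorem Cyc.reach (c : Cyc W K l0 l) (n k : ℕ) :
    Relation.ReflTransGen K.R (c.c (n + k)) (c.c n) := by
  induction k with
  | zero => exact .refl
  | succ k ih => exact .head (c.step _) ih

theorem GR.cyc_to (c : Cyc W K l0 l) (b : Bool) {r : ℕ} (hr : r < P.len c b) :
    Relation.ReflTransGen (GR (P := P)) (.cyc c b r hr) (.base (c.c 0)) := by
  have hl := P.hl
  have h1 : c.c r = c.c (r + l * 1) := (c.per_mul r 1).symm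
  have h2 : K.R (c.c r) (c.c (r + l - 1)) := by
    rw [h1]
    have := c.step (r + l - 1)
    rwa [show r + l - 1 + 1 = r + l * 1 by omega] at this
  have h3 : GR (P := P) (.cyc c b r hr) (.base (c.c (r + l - 1))) := h2
  refine .head h3 (GR.base_reach ?_)
  simpa using c.reach 0 (r + l - 1)

theorem GR.to_cyc (c : Cyc W K l0 l) (b : Bool) {r : ℕ} (hr : r < P.len c b) :
    Relation.ReflTransGen (GR (P := P)) (.base (c.c 0)) (.cyc c b r hr) := by
  have hM := P.M_pos
  have key : ∀ (b : Bool) {r : ℕ} (hr : r < P.len c b),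
      Relation.ReflTransGen (GR (P := P))
        (.cyc c b (P.len c b - 1) (Nat.sub_lt (P.len_pos c b) one_pos)) (.cyc c b r hr) := by
    intro b r hr
    have := GR.down c b hr (P.len c b - 1 - r) (by omega)
    convert this using 2
    omega
  have ht : ∀ {r : ℕ} (hr : r < P.len c true),
      Relation.ReflTransGen (GR (P := P)) (.base (c.c 0)) (.cyc c true r hr) := by
    intro r hr
    refine .head ?_ (key true hr)
    refine ⟨rfl, rfl, ?_⟩
    change M - 1 + 1 = M
    omega
  cases b with
  | true => exact ht hr
  | false =>
    refine (ht (P.len_pos c true)).trans (.head ?_ (key false hr))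
    refine ⟨rfl, Or.inr ⟨rfl, rfl, ?_⟩⟩
    have := P.len_pos c false
    omega

/-- Representative base state of a gadget state. -/
def GS.anchor : GS P → K.State
  | .base s => s
  | .cyc c _ _ _ => c.c 0

theorem GS.to_anchor (a : GS P) : Relation.ReflTransGen GR a (.base a.anchor) := by
  cases a with
  | base s => exact .refl
  | cyc c b r h => exact GR.cyc_to c b h

theorem GS.of_anchor (a : GS P) : Relation.ReflTransGen GR (.base a.anchor) a := by
  cases a with
  | base s => exact .refl
  | cyc c b r h => exact GR.to_cyc c b h

end gadget

/-- The gadget initial structure. -/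
def GI {Atom : Type u} {W : Set Atom} {K : InitKripke Atom} {l0 l D M : ℕ}
    (P : GP W K.toKripke l0 l D M) (p : Atom) : InitKripke Atom where
  toKripke := GK P p
  s0 := GS.base K.s0
  initial := by
    refine exists_path_all (S := (GK P p).State) (GK P p).serial _ ?_ ?_
    · intro x
      exact (GR.base_reach (K.reach (GS.anchor x))).trans (GS.of_anchor x)
    · intro x y
      rcases K.total (GS.anchor x) (GS.anchor y) with h | h
      · exact Or.inl ((GS.to_anchor x).trans ((GR.base_reach h).trans (GS.of_anchor y)))
      · exact Or.inr ((GS.to_anchor y).trans ((GR.base_reach h).trans (GS.of_anchor x)))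

/-! ### Separation -/

section separation

variable {Atom : Type u} {W V : Set Atom} {K : Kripke Atom} {l0 l D M : ℕ}
  {P : GP W K l0 l D M} {p : Atom}

/-- Bisimilarity inside the gadget structure. -/
def GB (P : GP W K l0 l D M) (p : Atom) (V : Set Atom) (a b : GS P) : Prop :=
  VBisim V ⟨GK P p, a⟩ ⟨GK P p, b⟩

theorem GB.symm {a b : GS P} (h : GB P p V a b) : GB P p V b a := VBisim.symm h

theorem GB.trans {a b c : GS P} (h : GB P p V a b) (k : GB P p V b c) : GB P p V a c :=
  VBisim.trans h k

theorem GB.forth {a b a' : GS P} (h : GB P p V a b) (k : GR a a') :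
    ∃ b', GR b b' ∧ GB P p V a' b' := VBisim.forth (A := GK P p) (B := GK P p) h k

theorem GB.pulse (hp : p ∉ V) {a b : GS P} (h : GB P p V a b) (ha : a.rem = 0) : b.rem = 0 := by
  have h1 := Set.ext_iff.1 (VBisim.label h) p
  simp only [GK, Set.mem_sdiff, Set.mem_ofPred_eq, hp, not_false_eq_true, and_true, ne_eq,
    not_true_eq_false, and_false, true_and, false_or] at h1
  exact h1.1 ha

theorem GS.lt_M {a : GS P} {r : ℕ} (h : a.rem = r) (h' : r < M) :
    ∃ c b hr, a = .cyc c b r hr := by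
  subst h
  cases a with
  | base s => exact absurd h' (lt_irrefl _)
  | cyc c b r hr => exact ⟨c, b, hr, rfl⟩

theorem GB.rem_le (hp : p ∉ V) (r : ℕ) : ∀ {a b : GS P}, GB P p V a b → a.rem = r → r < M →
    b.rem ≤ r := by
  induction r with
  | zero => intro a b h ha _; exact (h.pulse hp ha).le
  | succ r ih =>
    intro a b h ha hr
    obtain ⟨c, e, hc, rfl⟩ := GS.lt_M ha hr
    have h1 : GR (P := P) (.cyc c e _ hc) (.cyc c e r (by omega)) := ⟨rfl, Or.inl ⟨rfl, rfl⟩⟩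
    obtain ⟨b', hb, hb'⟩ := h.forth h1
    have := ih hb' rfl (by omega)
    have := hb.rem_le
    omega

theorem GB.cyc (hp : p ∉ V) {c : Cyc W K l0 l} {b : Bool} {r : ℕ} {hr : r < P.len c b} {x : GS P}
    (h : GB P p V (.cyc c b r hr) x) : ∃ c' b' hr', x = .cyc c' b' r hr' := by
  have hM : r < M := lt_of_lt_of_le hr (P.len_le c b)
  have h1 := GB.rem_le hp r h rfl hM
  have h2 : r ≤ x.rem := GB.rem_le hp x.rem h.symm rfl (by omega)
  have h3 : x.rem = r := by omega
  exact GS.lt_M h3 hM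

theorem GB.down (hp : p ∉ V) {c c' : Cyc W K l0 l} {b b' : Bool} (r : ℕ) :
    ∀ {hr : r < P.len c b} {hr' : r < P.len c' b'},
    GB P p V (.cyc c b r hr) (.cyc c' b' r hr') →
    GB P p V (.cyc c b 0 (P.len_pos _ _)) (.cyc c' b' 0 (P.len_pos _ _)) := by
  induction r with
  | zero => intro _ _ h; exact h
  | succ r ih =>
    intro hr hr' h
    have h1 : GR (P := P) (.cyc c b _ hr) (.cyc c b r (by omega)) := ⟨rfl, Or.inl ⟨rfl, rfl⟩⟩
    obtain ⟨x, hx, hb⟩ := h.forth h1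
    obtain ⟨c1, b1, hr1, rfl⟩ := hb.cyc hp
    obtain ⟨rfl, ⟨rfl, _⟩ | ⟨h0, _⟩⟩ := hx
    · exact ih hb
    · omega

theorem GB.flip (hp : p ∉ V) {c c' : Cyc W K l0 l} {b b' : Bool}
    (h : GB P p V (.cyc c b 0 (P.len_pos _ _)) (.cyc c' b' 0 (P.len_pos _ _))) :
    P.len c (!b) = P.len c' (!b') ∧
    GB P p V (.cyc c (!b) 0 (P.len_pos _ _)) (.cyc c' (!b') 0 (P.len_pos _ _)) := by
  have hl := P.len_pos c (!b)
  have h1 : GR (P := P) (.cyc c b 0 (P.len_pos _ _))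
      (.cyc c (!b) (P.len c (!b) - 1) (by omega)) := ⟨rfl, Or.inr ⟨rfl, rfl, by omega⟩⟩
  obtain ⟨x, hx, hb⟩ := h.forth h1
  obtain ⟨c1, b1, hr1, rfl⟩ := hb.cyc hp
  obtain ⟨rfl, ⟨_, h0⟩ | ⟨_, rfl, h0⟩⟩ := hx
  · omega
  · exact ⟨by omega, hb.down hp⟩

theorem GB.cyc_eq (hp : p ∉ V) {c c' : Cyc W K l0 l} {b b' : Bool} {r r' : ℕ}
    {hr : r < P.len c b} {hr' : r' < P.len c' b'}
    (h : GB P p V (.cyc c b r hr) (.cyc c' b' r' hr')) : c = c' := by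
  obtain ⟨c1, b1, hr1, e⟩ := h.cyc hp
  obtain ⟨rfl, rfl, rfl⟩ := by simpa using e
  obtain ⟨e1, h1⟩ := (h.down hp).flip hp
  obtain ⟨e2, -⟩ := h1.flip hp
  have hc := P.lt c
  have hc' := P.lt c'
  apply P.inj
  cases b <;> cases b' <;> simp [GP.len] at e1 e2 <;> omega

theorem GB.base_base (hp : p ∉ V) {s : K.State} {x : GS P} (h : GB P p V (.base s) x) :
    ∃ t, x = .base t := by
  cases x with
  | base t => exact ⟨t, rfl⟩
  | cyc c b r hr =>
    obtain ⟨_, _, _, h⟩ := h.symm.cyc hp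
    cases h

theorem GB.recurrent (hp : p ∉ V) {c : Cyc W K l0 l} {v : K.State}
    (h : GB P p V (.base (c.c 0)) (.base v)) : c.c 0 = v := by
  have hM := P.M_pos
  have h1 : GR (P := P) (.base (c.c 0)) (.cyc c true (M - 1) (by change M - 1 < M; omega)) :=
    ⟨rfl, rfl, by omega⟩
  obtain ⟨x, hx, hb⟩ := h.forth h1
  obtain ⟨c1, b1, hr1, rfl⟩ := hb.cyc hp
  obtain rfl := hb.cyc_eq hp
  exact hx.1.symm

theorem GB.sim (hp : p ∉ V) {s t x : K.State} (h : GB P p V (.base s) (.base t))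
    (hx : Relation.TransGen K.R s x) :
    ∃ y, Relation.TransGen K.R t y ∧ GB P p V (.base x) (.base y) := by
  induction hx with
  | single h1 =>
    obtain ⟨y, hy, hb⟩ := h.forth (GR.to_base (P := P) (a := .base s) h1)
    obtain ⟨y, rfl⟩ := hb.base_base hp
    exact ⟨y, .single hy, hb⟩
  | @tail a b _ h1 ih =>
    obtain ⟨z, hz, hbz⟩ := ih
    obtain ⟨y, hy, hb⟩ := hbz.forth (GR.to_base (P := P) (a := .base a) h1)
    obtain ⟨y, rfl⟩ := hb.base_base hp
    exact ⟨y, hz.tail hy, hb⟩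

theorem exists_recurrent {S : Type u} [Finite S] {R : S → S → Prop} (X : S → Prop)
    (hX : ∀ x, X x → ∃ y, X y ∧ Relation.TransGen R x y) (hne : ∃ x, X x) :
    ∃ x, X x ∧ Relation.TransGen R x x := by
  by_contra hcon
  push Not at hcon
  let Q : {x // X x} → {x // X x} → Prop := fun x y => Relation.TransGen R y.1 x.1
  have h1 : IsTrans _ Q := ⟨fun a b c h1 h2 => Relation.TransGen.trans h2 h1⟩
  have h2 : Std.Irrefl Q := ⟨fun a h => hcon a.1 a.2 h⟩
  have wf : WellFounded Q := Finite.wellFounded_of_trans_of_irrefl Q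
  obtain ⟨x, hx⟩ := hne
  obtain ⟨m, -, hm⟩ := wf.has_min Set.univ ⟨⟨x, hx⟩, trivial⟩
  obtain ⟨y, hy, hxy⟩ := hX m.1 m.2
  exact hm ⟨y, hy⟩ trivial hxy

theorem GB.base_eq (hp : p ∉ V)
    (hper : ∀ u : K.State, Relation.TransGen K.R u u → ∃ c : Cyc W K l0 l, c.c 0 = u)
    {s t : K.State} (h : GB P p V (.base s) (.base t)) (hst : Relation.ReflTransGen K.R s t) :
    s = t := by
  by_contra hne
  have hst' : Relation.TransGen K.R s t := by
    rcases Relation.reflTransGen_iff_eq_or_transGen.1 hst with h | h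
    · exact absurd h.symm hne
    · exact h
  obtain ⟨r, ⟨hr, _⟩, hrr⟩ := exists_recurrent (R := K.R)
    (fun v => GB P p V (.base s) (.base v) ∧
      ∃ w, GB P p V (.base s) (.base w) ∧ Relation.TransGen K.R w v) (by
      rintro v ⟨hv, w, hw, hwv⟩
      obtain ⟨y, hy, hb⟩ := (hw.symm.trans hv).sim hp hwv
      exact ⟨y, ⟨hv.trans hb, v, hv, hy⟩, hy⟩) ⟨t, h, s, VBisim.refl _ _, hst'⟩
  obtain ⟨c, rfl⟩ := hper r hrr
  have e1 := hr.symm.recurrent hp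
  have e2 := (hr.symm.trans h).recurrent hp
  exact hne (e1.symm.trans e2)

theorem GB.sep (hp : p ∉ V)
    (hper : ∀ u : K.State, Relation.TransGen K.R u u → ∃ c : Cyc W K l0 l, c.c 0 = u)
    (htot : ∀ x y, Relation.ReflTransGen K.R x y ∨ Relation.ReflTransGen K.R y x)
    {a b : GS P} (h : GB P p V a b) : a.bs = b.bs := by
  cases a with
  | base s =>
    obtain ⟨t, rfl⟩ := h.base_base hp
    rcases htot s t with hst | hst
    · exact h.base_eq hp hper hst
    · exact (h.symm.base_eq hp hper hst).symm
  | cyc c b0 r hr =>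
    obtain ⟨c', b', hr', rfl⟩ := h.cyc hp
    obtain rfl := h.cyc_eq hp
    rfl

end separation

/-! ### Hosting of periodic type sequences -/

theorem host_walk {Atom : Type u} {W : Set Atom} {A B : Kripke Atom} {l0 l : ℕ}
    (c : Cyc W A l0 l) (n : ℕ) : ∀ s : B.State, tp W B s = tp W A (c.c n) →
    ∃ b : ℕ → B.State, b n = s ∧ (∀ k < n, B.R (b (k + 1)) (b k)) ∧
      ∀ k ≤ n, tp W B (b k) = tp W A (c.c k) := by
  induction n with
  | zero =>
    intro s hs
    refine ⟨fun _ => s, rfl, by simp, fun k hk => ?_⟩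
    obtain rfl : k = 0 := by omega
    exact hs
  | succ n ih =>
    intro s hs
    obtain ⟨t, ht, htt⟩ := tp_step hs.symm (c.step n)
    obtain ⟨b, h0, hR, hT⟩ := ih t htt
    refine ⟨fun k => if k = n + 1 then s else b k, by simp, fun k hk => ?_, fun k hk => ?_⟩
    · by_cases hkn : k = n
      · subst hkn
        simpa [h0] using ht
      · have : k ≠ n + 1 := by omega
        simpa [hkn, this] using hR k (by omega)
    · by_cases hkn : k = n + 1
      · subst hkn
        simpa using hs
      · simpa [hkn] using hT k (by omega)

theorem host {Atom : Type u} {W : Set Atom} {A B : Kripke Atom} {l0 l N : ℕ}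
    (c : Cyc W A l0 l) (hl0 : 0 < l0) (hN : Nat.card B.State ≤ N) (hl : l = l0 * N.factorial)
    (s : B.State) (hs : tp W B s = tp W A (c.c 0)) :
    ∃ c' : Cyc W B l0 l, (∀ n, tp W B (c'.c n) = tp W A (c.c n)) ∧
      Relation.TransGen (fun x y => B.R x y ∧ ∃ k, tp W B x = tp W A (c.c k)) s (c'.c 0) := by
  obtain ⟨b, h0, hR, hT⟩ := host_walk c (l0 * (N + 1)) s (by
    rw [hs]; simpa using (c.tper_mul 0 (N + 1)).symm)
  obtain ⟨x, y, hxy, hyN, he⟩ : ∃ x y : ℕ, x < y ∧ y ≤ N ∧ b (l0 * x) = b (l0 * y) := by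
    by_contra hcon
    push Not at hcon
    have hinj : Function.Injective (fun i : Fin (N + 1) => b (l0 * i)) := by
      intro i j hij
      rcases lt_trichotomy i.1 j.1 with h | h | h
      · exact absurd hij (hcon i j h (by omega))
      · exact Fin.ext h
      · exact absurd hij.symm (hcon j i h (by omega))
    have := Nat.card_le_card_of_injective _ hinj
    simp at this
    omega
  obtain ⟨e, rfl⟩ : ∃ e, y = x + (e + 1) := ⟨y - x - 1, by omega⟩
  have hj : 0 < l0 * (e + 1) := Nat.mul_pos hl0 (by omega)
  have hle : l0 * (x + (e + 1)) ≤ l0 * (N + 1) := Nat.mul_le_mul_left _ (by omega)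
  have hlt : l0 * x < l0 * (N + 1) := Nat.mul_lt_mul_of_pos_left (by omega) hl0
  rw [mul_add] at hle
  have htp : ∀ n, tp W B (b (l0 * x + n % (l0 * (e + 1)))) = tp W A (c.c n) := by
    intro n
    have := Nat.mod_lt n hj
    rw [hT _ (by omega), add_comm, c.tper_mul]
    have h2 := c.tper_mul (n % (l0 * (e + 1))) ((e + 1) * (n / (l0 * (e + 1))))
    rw [← mul_assoc, Nat.mod_add_div] at h2
    exact h2.symm
  have hdl : l0 * (e + 1) ∣ l := by
    rw [hl]
    exact Nat.mul_dvd_mul_left _ (Nat.dvd_factorial (by omega) (by omega))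
  refine ⟨⟨fun n => b (l0 * x + n % (l0 * (e + 1))), ?_, ?_, ?_⟩, htp, ?_⟩
  · refine periodize (w := fun k => b (l0 * x + k)) hj ?_ ?_
    · simp only [add_zero]
      rw [he]
      exact congrArg b (by ring)
    · intro n hn
      exact hR (l0 * x + n) (by omega)
  · intro n
    obtain ⟨k, hk⟩ := hdl
    simp [hk]
  · intro n
    rw [htp, htp, c.tper]
  · have key : ∀ k, l0 * x + (k + 1) ≤ l0 * (N + 1) →
        Relation.TransGen (fun x y => B.R x y ∧ ∃ k, tp W B x = tp W A (c.c k))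
          (b (l0 * x + (k + 1))) (b (l0 * x)) := by
      intro k
      induction k with
      | zero =>
        intro hk
        exact .single ⟨hR _ (by omega), _, hT _ (by omega)⟩
      | succ k ih =>
        intro hk
        exact .head ⟨hR (l0 * x + (k + 1)) (by omega), _, hT _ (by omega)⟩ (ih (by omega))
    have := key (l0 * (N + 1) - l0 * x - 1) (by omega)
    rw [show l0 * x + (l0 * (N + 1) - l0 * x - 1 + 1) = l0 * (N + 1) by omega, h0] at this
    simpa using this

/-! ### Closeness of gadget states -/

section close

variable {Atom : Type u} {W : Set Atom} {A B : Kripke Atom} {l0 l D M : ℕ}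
  {P : GP W A l0 l D M} {Q : GP W B l0 l D M}

/-- Two gadget states cannot be told apart at level `d`. -/
def Close (d : ℕ) (a : GS P) (b : GS Q) : Prop :=
  (∃ c e r h c' e' h', a = .cyc c e r h ∧ b = .cyc c' e' r h' ∧ r < l * (d + 1) ∧
    ∀ n, tp W A (c.c n) = tp W B (c'.c n)) ∨
  (tp W A a.bs = tp W B b.bs ∧ l * (d + 1) ≤ a.rem ∧ l * (d + 1) ≤ b.rem)

theorem Close.symm {d : ℕ} {a : GS P} {b : GS Q} (h : Close d a b) : Close d b a := by
  rcases h with ⟨c, e, r, h, c', e', h', h1, h2, h3, h4⟩ | ⟨h1, h2, h3⟩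
  · exact Or.inl ⟨c', e', r, h', c, e, h, h2, h1, h3, fun n => (h4 n).symm⟩
  · exact Or.inr ⟨h1.symm, h3, h2⟩

theorem Close.tp {d : ℕ} {a : GS P} {b : GS Q} (h : Close d a b) : tp W A a.bs = tp W B b.bs := by
  rcases h with ⟨c, e, r, h, c', e', h', rfl, rfl, h3, h4⟩ | ⟨h1, h2, h3⟩
  · exact h4 r
  · exact h1

theorem Close.pulse {d : ℕ} {a : GS P} {b : GS Q} (h : Close d a b) (ha : a.rem = 0) :
    b.rem = 0 := by
  have hl : 0 < l * (d + 1) := Nat.mul_pos P.hl (by omega)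
  rcases h with ⟨c, e, r, h, c', e', h', rfl, rfl, h3, h4⟩ | ⟨h1, h2, h3⟩
  · exact ha
  · omega

theorem Close.pred {d : ℕ} {a : GS P} {b : GS Q} (h : Close (d + 1) a b) : Close d a b := by
  have hl : l * (d + 1) ≤ l * (d + 1 + 1) := Nat.mul_le_mul_left _ (by omega)
  rcases h with ⟨c, e, r, h, c', e', h', rfl, rfl, h3, h4⟩ | ⟨h1, h2, h3⟩
  · by_cases hr : r < l * (d + 1)
    · exact Or.inl ⟨c, e, r, h, c', e', h', rfl, rfl, hr, h4⟩
    · exact Or.inr ⟨h4 r, not_lt.1 hr, not_lt.1 hr⟩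
  · exact Or.inr ⟨h1, by omega, by omega⟩

theorem Close.mono {d d' : ℕ} (hd : d ≤ d') {a : GS P} {b : GS Q} (h : Close d' a b) :
    Close d a b := by
  induction d', hd using Nat.le_induction with
  | base => exact h
  | succ n _ ih => exact ih h.pred

theorem base_match {d : ℕ} (hd : d ≤ D) {a a' : GS P} {b : GS Q} (h : tp W A a.bs = tp W B b.bs)
    (haa : GR a a') (hr : l * (d + 1) ≤ a'.rem) :
    ∃ t, GR b (.base t) ∧ Close (Q := Q) d a' (.base t) := by
  obtain ⟨t, ht, htt⟩ := tp_step h haa.bs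
  have : l * (d + 1) ≤ l * (D + 3) := Nat.mul_le_mul_left _ (by omega)
  exact ⟨t, GR.to_base ht, Or.inr ⟨htt.symm, hr, this.trans Q.hM⟩⟩

/-- Steps from states close to an earlier state of the path. -/
def St (d : ℕ) (π : ℕ → GS P) (n : ℕ) (x y : GS Q) : Prop :=
  (∃ j < n, Close d (π j) x) ∧ GR x y

theorem St.mono {d : ℕ} {π : ℕ → GS P} {n m : ℕ} (h : n ≤ m) {x y : GS Q}
    (hs : Relation.ReflTransGen (St d π n) x y) : Relation.ReflTransGen (St d π m) x y :=
  Relation.ReflTransGen.mono (fun _ _ ⟨⟨j, hj, hc⟩, hg⟩ => ⟨⟨j, by omega, hc⟩, hg⟩) _ _ hs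

/-- The conclusion of the key lemma. -/
def KeyC (d : ℕ) (π : ℕ → GS P) (b : GS Q) : Prop :=
  ∃ n, 1 ≤ n ∧ (∀ m < n, ∃ t, Relation.ReflTransGen (St d π m) b t ∧ Close d (π m) t) ∧
    ∃ b', Relation.TransGen (St d π n) b b' ∧ Close (d + 1) (π n) b'

theorem KeyC.one {d : ℕ} {π : ℕ → GS P} {b b' : GS Q} (h : Close d (π 0) b) (hb : GR b b')
    (hc : Close (d + 1) (π 1) b') : KeyC d π b := by
  refine ⟨1, le_rfl, fun m hm => ?_, b', .single ⟨⟨0, one_pos, h⟩, hb⟩, hc⟩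
  obtain rfl : m = 0 := by omega
  exact ⟨b, .refl, h⟩

theorem mimic {d : ℕ} (hd : d + 1 ≤ D) {π : ℕ → GS P} (hπ : ∀ n, GR (π n) (π (n + 1))) {b : GS Q}
    (h0 : tp W A (π 0).bs = tp W B b.bs)
    (hb : l * (d + 1 + 1) ≤ b.rem) (m : ℕ) :
    (∀ j ≤ m, l * (d + 1) ≤ (π j).rem) →
    ∃ t, Relation.ReflTransGen (St d π m) b t ∧ tp W A (π m).bs = tp W B t.bs ∧
      l * (d + 1 + 1) ≤ t.rem := by
  have hll : l * (d + 1) ≤ l * (d + 1 + 1) := Nat.mul_le_mul_left _ (by omega)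
  have hM : l * (d + 1 + 1) ≤ l * (D + 3) := Nat.mul_le_mul_left _ (by omega)
  have hM' := Q.hM
  induction m with
  | zero => intro _; exact ⟨b, .refl, h0, hb⟩
  | succ m ih =>
    intro hj
    obtain ⟨t, h1, h2, h3⟩ := ih (fun j hm => hj j (by omega))
    obtain ⟨t', h4, h5⟩ := base_match (d := d) (by omega) h2 (hπ m) (hj _ le_rfl)
    refine ⟨.base t', (St.mono (Nat.le_succ m) h1).tail ⟨⟨m, by omega, ?_⟩, h4⟩, h5.tp, ?_⟩
    · exact Or.inr ⟨h2, hj m (by omega), by omega⟩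
    · exact hM.trans hM'

end close

section key

variable {Atom : Type u} {W : Set Atom} {A B : Kripke Atom} {l0 l D M N : ℕ}
  {P : GP W A l0 l D M} {Q : GP W B l0 l D M}

theorem detour_base {d n : ℕ} {π : ℕ → GS P} {c : Cyc W A l0 l} {u : B.State} {t : GS Q}
    (hM : l * (d + 1) ≤ M) (ht : l * (d + 1) ≤ t.rem)
    (hcov : ∀ k, ∃ j < n, tp W A (π j).bs = tp W A (c.c k) ∧ l * (d + 1) ≤ (π j).rem)
    (h : Relation.TransGen (fun x y => B.R x y ∧ ∃ k, tp W B x = tp W A (c.c k)) t.bs u) :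
    Relation.TransGen (St (Q := Q) d π n) t (.base u) := by
  induction h with
  | single h =>
    obtain ⟨h1, k, hk⟩ := h
    obtain ⟨j, hj, hj1, hj2⟩ := hcov k
    exact .single ⟨⟨j, hj, Or.inr ⟨hj1.trans hk.symm, hj2, ht⟩⟩, GR.to_base h1⟩
  | @tail x y _ h ih =>
    obtain ⟨h1, k, hk⟩ := h
    obtain ⟨j, hj, hj1, hj2⟩ := hcov k
    exact ih.tail ⟨⟨j, hj, Or.inr ⟨hj1.trans hk.symm, hj2, hM⟩⟩, GR.to_base h1⟩

theorem detour_down {d n : ℕ} {π : ℕ → GS P} {c : Cyc W A l0 l} {c' : Cyc W B l0 l}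
    (hcc : ∀ n, tp W B (c'.c n) = tp W A (c.c n))
    (hcov : ∀ k, ∃ j < n, tp W A (π j).bs = tp W A (c.c k) ∧ l * (d + 1) ≤ (π j).rem)
    {r : ℕ} (hr : l * (d + 1) ≤ r + 1) (k : ℕ) : ∀ hk : r + k < Q.len c' true,
    Relation.ReflTransGen (St (Q := Q) d π n) (.cyc c' true (r + k) hk)
      (.cyc c' true r (by omega)) := by
  induction k with
  | zero => intro _; exact .refl
  | succ k ih =>
    intro hk
    obtain ⟨j, hj, hj1, hj2⟩ := hcov (r + (k + 1))
    have h1 : St (Q := Q) d π n (.cyc c' true (r + (k + 1)) hk) (.cyc c' true (r + k) (by omega)) :=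
      ⟨⟨j, hj, Or.inr ⟨hj1.trans (hcc _).symm, hj2, by change _ ≤ r + (k + 1); omega⟩⟩,
        rfl, Or.inl ⟨rfl, rfl⟩⟩
    exact .head h1 (ih _)

theorem key_lemma (hN : Nat.card B.State ≤ N) (hlN : l = l0 * N.factorial) {d : ℕ}
    (hd : d + 1 ≤ D) {π : ℕ → GS P} (hπ : ∀ n, GR (π n) (π (n + 1))) {b : GS Q}
    (h : Close (d + 1) (π 0) b) : KeyC d π b := by
  have hl := P.hl
  have hll : l * (d + 1 + 1) = l * (d + 1) + l := by ring
  have hMM : l * (d + 1 + 1) + l ≤ l * (D + 3) := by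
    have : l * (d + 1 + 1) + l = l * (d + 3) := by ring
    rw [this]
    exact Nat.mul_le_mul_left _ (by omega)
  have hM := P.hM
  by_cases h1r : l * (d + 1 + 1) ≤ (π 1).rem
  · obtain ⟨t, ht, hc⟩ := base_match (d := d + 1) hd h.tp (hπ 0) h1r
    exact KeyC.one h.pred ht hc
  obtain ⟨c, e, hq, h1⟩ := GS.lt_M (a := π 1) rfl (by omega)
  rcases h with ⟨c0, e0, r, hr, c', e', hr', ha, rfl, h3, h4⟩ | ⟨hty, ha, hb⟩
  ·
    have hg := hπ 0
    rw [ha, zero_add, h1] at hg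
    obtain ⟨rfl, ⟨rfl, hr1⟩ | ⟨_, _, hr1⟩⟩ := hg
    · have hc1 : Close d (π 0) (.cyc c' e' r hr') :=
        Close.pred (Or.inl ⟨c0, e0, r, hr, c', e', hr', ha, rfl, h3, h4⟩)
      refine KeyC.one (b' := .cyc c' e' (π 1).rem (by omega)) hc1 ⟨rfl, Or.inl ⟨rfl, hr1⟩⟩ ?_
      exact Or.inl ⟨c0, e0, _, hq, c', e', _, h1, rfl, by omega, h4⟩
    · have := P.len_ge c0 e
      omega
  ·
    have h01 := (hπ 0).rem_le
    rw [zero_add] at h01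
    have hrem : (π 1).rem = l * (d + 1) + (l - 1) := by omega
    by_cases hall : ∀ i ≤ l, ∃ hi, π (1 + i) = .cyc c e (l * (d + 1) + l - 1 - i) hi
    ·
      have hhigh : ∀ j ≤ l, l * (d + 1) ≤ (π j).rem := by
        intro j hj
        rcases Nat.eq_zero_or_pos j with rfl | hj0
        · omega
        · obtain ⟨hi, hi'⟩ := hall (j - 1) (by omega)
          rw [show 1 + (j - 1) = j by omega] at hi'
          rw [hi']
          change _ ≤ l * (d + 1) + l - 1 - (j - 1)
          omega
      refine ⟨1 + l, by omega, fun m hm => ?_, ?_⟩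
      · obtain ⟨t, ht1, ht2, ht3⟩ := mimic hd hπ hty hb m (fun j hj => hhigh j (by omega))
        exact ⟨t, ht1, Or.inr ⟨ht2, hhigh m (by omega), by omega⟩⟩
      · obtain ⟨t, ht1, ht2, ht3⟩ := mimic hd hπ hty hb l hhigh
        have hcov : ∀ k, ∃ j < 1 + l, tp W A (π j).bs = tp W A (c.c k) ∧
            l * (d + 1) ≤ (π j).rem := by
          intro k
          have hk := Nat.mod_lt k hl
          obtain ⟨hi, hi'⟩ := hall (l - 1 - k % l) (by omega)
          refine ⟨1 + (l - 1 - k % l), by omega, ?_, hhigh _ (by omega)⟩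
          rw [hi']
          change tp W A (c.c _) = _
          rw [show l * (d + 1) + l - 1 - (l - 1 - k % l) = k % l + l * (d + 1) by omega,
            c.per_mul, c.per_mod]
        have hs : tp W B t.bs = tp W A (c.c 0) := by
          rw [← ht2]
          obtain ⟨hi, hi'⟩ := hall (l - 1) (by omega)
          rw [show 1 + (l - 1) = l by omega] at hi'
          rw [hi']
          change tp W A (c.c _) = _
          rw [show l * (d + 1) + l - 1 - (l - 1) = 0 + l * (d + 1) by omega, c.per_mul]
        obtain ⟨c', hcc, hw⟩ := host c P.hl0 hN hlN t.bs hs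
        have hw1 := detour_base (Q := Q) (n := 1 + l) (π := π) (by omega) (by omega) hcov hw
        have hlM : Q.len c' true = M := rfl
        have hdn := detour_down (Q := Q) (n := 1 + l) (π := π) (d := d) hcc hcov
          (r := l * (d + 1) - 1) (by omega) (M - 1 - (l * (d + 1) - 1)) (by omega)
        have hld : 0 < l * (d + 1) := Nat.mul_pos hl (by omega)
        have hen : St (Q := Q) d π (1 + l) (.base (c'.c 0))
            (.cyc c' true (l * (d + 1) - 1 + (M - 1 - (l * (d + 1) - 1))) (by omega)) := by
          obtain ⟨j, hj, hj1, hj2⟩ := hcov 0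
          refine ⟨⟨j, hj, Or.inr ⟨hj1.trans (hcc 0).symm, hj2, ?_⟩⟩, rfl, rfl, by omega⟩
          change _ ≤ M
          omega
        refine ⟨_, Relation.TransGen.trans_left
          (Relation.TransGen.tail (Relation.TransGen.trans_right
            (St.mono (by omega) ht1) hw1) hen) hdn, ?_⟩
        obtain ⟨hi, hi'⟩ := hall l le_rfl
        refine Or.inl ⟨c, e, l * (d + 1) - 1, ?_, c', true, _, ?_, rfl, by omega,
          fun n => (hcc n).symm⟩
        · have := P.len_ge c e
          omega
        · rw [hi']
          congr 1
          omega
    ·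
      classical
      push Not at hall
      let i := Nat.find hall
      obtain ⟨hil, hin⟩ := Nat.find_spec hall
      have hmin : ∀ k < i, ∃ hk, π (1 + k) = .cyc c e (l * (d + 1) + l - 1 - k) hk := by
        intro k hk
        have := Nat.find_min hall hk
        push Not at this
        exact this (by have : i ≤ l := hil; omega)
      change i ≤ l at hil
      change ∀ _, π (1 + i) ≠ _ at hin
      have hi0 : 0 < i := by
        rcases Nat.eq_zero_or_pos i with h0 | h0
        · exfalso
          rw [h0] at hin
          refine hin (by have := P.len_ge c e; omega) ?_
          rw [h1]
          congr 1
          omega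
        · exact h0
      have hhigh : ∀ j ≤ i, l * (d + 1) ≤ (π j).rem := by
        intro j hj
        rcases Nat.eq_zero_or_pos j with rfl | hj0
        · omega
        · obtain ⟨hi, hi'⟩ := hmin (j - 1) (by omega)
          rw [show 1 + (j - 1) = j by omega] at hi'
          rw [hi']
          change _ ≤ l * (d + 1) + l - 1 - (j - 1)
          omega
      have hbase : ∃ s, π (i + 1) = .base s := by
        obtain ⟨hk, hk'⟩ := hmin (i - 1) (by omega)
        rw [show 1 + (i - 1) = i by omega] at hk'
        have hg := hπ i
        rw [hk'] at hg
        rw [add_comm 1 i] at hin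
        generalize π (i + 1) = x at hg hin
        cases x with
        | base s => exact ⟨s, rfl⟩
        | cyc c2 e2 r2 hr2 =>
          exfalso
          have hld : 0 < l * (d + 1) := Nat.mul_pos hl (by omega)
          obtain ⟨rfl, ⟨rfl, hr1⟩ | ⟨hr1, _⟩⟩ := hg
          · refine hin (by omega) ?_
            congr 1
            omega
          · omega
      obtain ⟨s, hs⟩ := hbase
      refine ⟨i + 1, by omega, fun m hm => ?_, ?_⟩
      · obtain ⟨t, ht1, ht2, ht3⟩ := mimic hd hπ hty hb m (fun j hj => hhigh j (by omega))
        exact ⟨t, ht1, Or.inr ⟨ht2, hhigh m (by omega), by omega⟩⟩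
      · obtain ⟨t, ht1, ht2, ht3⟩ := mimic hd hπ hty hb i hhigh
        obtain ⟨t', h4, h5⟩ := base_match (Q := Q) (d := d + 1) hd ht2 (hπ i) (by
          rw [hs]; change _ ≤ M; omega)
        refine ⟨_, Relation.TransGen.tail' (St.mono (Nat.le_succ i) ht1) ⟨⟨i, by omega, ?_⟩, h4⟩, h5⟩
        exact Or.inr ⟨ht2, hhigh i le_rfl, by omega⟩

end key

/-! ### Preservation of CTL formulas -/

/-- Nesting depth of the temporal operators. -/
def CTL.depth {Atom : Type u} : CTL Atom → ℕ
  | .bot => 0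
  | .top => 0
  | .atom _ => 0
  | .neg φ => φ.depth
  | .or φ ψ => max φ.depth ψ.depth
  | .EX φ => φ.depth + 1
  | .EG φ => φ.depth + 1
  | .EU φ ψ => max φ.depth ψ.depth + 1

theorem eu_intro {Atom : Type u} {K : Kripke Atom} {φ ψ : CTL Atom} {s t : K.State}
    (h : Relation.ReflTransGen (fun x y => Sat K φ x ∧ K.R x y) s t) (ht : Sat K ψ t) :
    Sat K (.EU φ ψ) s := by
  induction h using Relation.ReflTransGen.head_induction_on with
  | refl =>
    obtain ⟨π, h0, h1, -⟩ := PathVia.nil K.serial t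
    exact ⟨π, h0, h1, 0, by rwa [h0], by simp⟩
  | @head a c h _ ih =>
    obtain ⟨π, h0, h1, i, h2, h3⟩ := ih
    refine ⟨fun n => Nat.casesOn n a π, rfl, ?_, i + 1, h2, ?_⟩
    · rintro (_ | n)
      · simpa [h0] using h.2
      · exact h1 n
    · rintro (_ | n) hn
      · exact h.1
      · exact h3 n (by omega)

theorem eg_intro {Atom : Type u} {K : Kripke Atom} {φ : CTL Atom} (X : K.State → Prop)
    (hX : ∀ x, X x → ∃ y, X y ∧ Relation.TransGen (fun x y => Sat K φ x ∧ K.R x y) x y)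
    {s : K.State} (hs : X s) : Sat K (.EG φ) s := by
  let Y : K.State → Prop :=
    fun x => ∃ y, X y ∧ Relation.TransGen (fun x y => Sat K φ x ∧ K.R x y) x y
  have hY : ∀ x : {x // Y x}, ∃ y : {x // Y x}, K.R x.1 y.1 := by
    rintro ⟨x, y, hy, h⟩
    obtain ⟨z, hz, hzy⟩ := Relation.TransGen.head'_iff.1 h
    rcases Relation.reflTransGen_iff_eq_or_transGen.1 hzy with e | h'
    · subst e
      exact ⟨⟨y, hX y hy⟩, hz.2⟩
    · exact ⟨⟨z, y, hy, h'⟩, hz.2⟩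
  have hY' : ∀ x : {x // Y x}, Sat K φ x.1 := by
    rintro ⟨x, y, hy, h⟩
    obtain ⟨z, hz, hzy⟩ := Relation.TransGen.head'_iff.1 h
    exact hz.1
  choose f hf using hY
  refine ⟨fun n => (f^[n] ⟨s, hX s hs⟩).1, rfl, fun n => ?_, fun n => hY' _⟩
  simp only [Function.iterate_succ_apply']
  exact hf _

section preserve

variable {Atom : Type u} {W : Set Atom} {A B : Kripke Atom} {l0 l D M N : ℕ}
  {P : GP W A l0 l D M} {Q : GP W B l0 l D M} {p : Atom}

theorem ex_step {d : ℕ} (hd : d + 1 ≤ D) {a a' : GS P} {b : GS Q} (h : Close (d + 1) a b)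
    (haa : GR a a') : ∃ b', GR b b' ∧ Close d a' b' := by
  have hl := P.hl
  have hll : l * (d + 1 + 1) = l * (d + 1) + l := by ring
  have hMM : l * (d + 1 + 1) + l ≤ l * (D + 3) := by
    have : l * (d + 1 + 1) + l = l * (d + 3) := by ring
    rw [this]
    exact Nat.mul_le_mul_left _ (by omega)
  have hM := P.hM
  by_cases hr : l * (d + 1) ≤ a'.rem
  · obtain ⟨t, h1, h2⟩ := base_match (d := d) (by omega) h.tp haa hr
    exact ⟨_, h1, h2⟩
  have hle := haa.rem_le
  obtain ⟨c, e, hq, ha'⟩ := GS.lt_M (a := a') rfl (by omega)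
  rcases h with ⟨c0, e0, r, hr0, c', e', hr', rfl, rfl, h3, h4⟩ | ⟨hty, ha, hb⟩
  · rw [ha'] at haa
    obtain ⟨rfl, ⟨rfl, hr1⟩ | ⟨_, _, hr1⟩⟩ := haa
    · refine ⟨.cyc c' e' a'.rem (by omega), ⟨rfl, Or.inl ⟨rfl, hr1⟩⟩, ?_⟩
      exact Or.inl ⟨c0, e0, _, hq, c', e', _, ha', rfl, by omega, h4⟩
    · have := P.len_ge c0 e
      omega
  · omega

theorem eu_pres (hN : Nat.card B.State ≤ N) (hlN : l = l0 * N.factorial) {d : ℕ} (hd : d + 1 ≤ D)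
    {φ ψ : CTL Atom}
    (h1 : ∀ (a : GS P) (b : GS Q), Close d a b → Sat (GK P p) φ a → Sat (GK Q p) φ b)
    (h2 : ∀ (a : GS P) (b : GS Q), Close d a b → Sat (GK P p) ψ a → Sat (GK Q p) ψ b) (m : ℕ) :
    ∀ (π : ℕ → GS P) (b : GS Q), (∀ n, GR (π n) (π (n + 1))) → Close (d + 1) (π 0) b →
      Sat (GK P p) ψ (π m) → (∀ j < m, Sat (GK P p) φ (π j)) →
      ∃ t : GS Q, Relation.ReflTransGen (fun x y => Sat (GK Q p) φ x ∧ GR x y) b t ∧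
        Sat (GK Q p) ψ t := by
  induction m using Nat.strong_induction_on with
  | _ m ih =>
    intro π b hπ hc hψ hφ
    obtain ⟨n, hn, hA, b', hB, hc'⟩ := key_lemma hN hlN hd hπ hc
    rcases lt_or_ge m n with hmn | hmn
    · obtain ⟨t, ht, htc⟩ := hA m hmn
      refine ⟨t, Relation.ReflTransGen.mono ?_ _ _ ht, h2 _ _ htc hψ⟩
      rintro x y ⟨⟨j, hj, hcj⟩, hg⟩
      exact ⟨h1 _ _ hcj (hφ j hj), hg⟩
    · obtain ⟨t, ht, hs⟩ := ih (m - n) (by omega) (fun k => π (n + k)) b' (fun k => hπ (n + k)) hc'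
        (by rwa [show n + (m - n) = m by omega]) (fun j hj => hφ _ (by omega))
      refine ⟨t, Relation.ReflTransGen.trans
        (Relation.ReflTransGen.mono ?_ _ _ hB.to_reflTransGen) ht, hs⟩
      rintro x y ⟨⟨j, hj, hcj⟩, hg⟩
      exact ⟨h1 _ _ hcj (hφ j (by omega)), hg⟩

theorem eg_pres (hN : Nat.card B.State ≤ N) (hlN : l = l0 * N.factorial) {d : ℕ} (hd : d + 1 ≤ D)
    {φ : CTL Atom}
    (h1 : ∀ (a : GS P) (b : GS Q), Close d a b → Sat (GK P p) φ a → Sat (GK Q p) φ b)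
    {a : GS P} {b : GS Q} (hab : Close (d + 1) a b) (h : Sat (GK P p) (.EG φ) a) :
    Sat (GK Q p) (.EG φ) b := by
  refine eg_intro (K := GK Q p) (fun b : GS Q => ∃ π : ℕ → GS P, (∀ n, GR (π n) (π (n + 1))) ∧
    (∀ n, Sat (GK P p) φ (π n)) ∧ Close (d + 1) (π 0) b) ?_ ?_
  · rintro b ⟨π, hπ, hφ, hc⟩
    obtain ⟨n, hn, -, b', hB, hc'⟩ := key_lemma hN hlN hd hπ hc
    refine ⟨b', ⟨fun k => π (n + k), fun k => hπ (n + k), fun k => hφ _, hc'⟩, ?_⟩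
    refine Relation.TransGen.mono ?_ _ _ hB
    rintro x y ⟨⟨j, hj, hcj⟩, hg⟩
    exact ⟨h1 _ _ hcj (hφ j), hg⟩
  · obtain ⟨π, h0, hπ, hφ⟩ := h
    exact ⟨π, hπ, hφ, by rw [h0]; exact hab⟩

theorem atom_pres {d : ℕ} {q : Atom} (hq : q ∉ W ∨ q = p) (a : GS P) (b : GS Q)
    (hab : Close d a b) (h : q ∈ (GK P p).L a) : q ∈ (GK Q p).L b := by
  have hpul := hab.pulse
  have hlab := Set.ext_iff.1 (tp_eq.1 hab.tp).label q
  simp only [Set.mem_sdiff] at hlab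
  change (q ∈ A.L a.bs ∧ q ≠ p) ∨ (q = p ∧ a.rem = 0) at h
  change (q ∈ B.L b.bs ∧ q ≠ p) ∨ (q = p ∧ b.rem = 0)
  tauto

theorem ctl_pres (hNA : Nat.card A.State ≤ N) (hNB : Nat.card B.State ≤ N)
    (hlN : l = l0 * N.factorial) (φ : CTL Atom) :
    (∀ q ∈ φ.vars, q ∉ W ∨ q = p) → ∀ d, φ.depth ≤ d → d ≤ D →
    ∀ (a : GS P) (b : GS Q), Close d a b → (Sat (GK P p) φ a ↔ Sat (GK Q p) φ b) := by
  induction φ with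
  | bot => intro _ _ _ _ _ _ _; exact Iff.rfl
  | top => intro _ _ _ _ _ _ _; exact Iff.rfl
  | atom q =>
    intro hv d _ _ a b hab
    exact ⟨atom_pres (hv q rfl) a b hab, atom_pres (hv q rfl) b a hab.symm⟩
  | neg φ ih =>
    intro hv d h1 h2 a b hab
    exact not_congr (ih hv d h1 h2 a b hab)
  | or φ ψ ih1 ih2 =>
    intro hv d h1 h2 a b hab
    have h3 : max φ.depth ψ.depth ≤ d := h1
    exact or_congr (ih1 (fun q hq => hv q (Or.inl hq)) d (by omega) h2 a b hab)
      (ih2 (fun q hq => hv q (Or.inr hq)) d (by omega) h2 a b hab)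
  | EX φ ih =>
    intro hv d h1 h2 a b hab
    have h3 : φ.depth + 1 ≤ d := h1
    obtain ⟨d, rfl⟩ : ∃ d', d = d' + 1 := ⟨d - 1, by omega⟩
    have ih' := ih hv d (by omega) (by omega)
    constructor
    · rintro ⟨a', ha, hs⟩
      obtain ⟨b', hb, hc⟩ := ex_step h2 hab ha
      exact ⟨b', hb, (ih' _ _ hc).1 hs⟩
    · rintro ⟨b', hb, hs⟩
      obtain ⟨a', ha, hc⟩ := ex_step h2 hab.symm hb
      exact ⟨a', ha, (ih' _ _ hc.symm).2 hs⟩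
  | EG φ ih =>
    intro hv d h1 h2 a b hab
    have h3 : φ.depth + 1 ≤ d := h1
    obtain ⟨d, rfl⟩ : ∃ d', d = d' + 1 := ⟨d - 1, by omega⟩
    have ih' := ih hv d (by omega) (by omega)
    exact ⟨eg_pres hNB hlN h2 (fun a b hc => (ih' a b hc).1) hab,
      eg_pres hNA hlN h2 (fun b a hc => (ih' a b hc.symm).2) hab.symm⟩
  | EU φ ψ ih1 ih2 =>
    intro hv d h1 h2 a b hab
    have h3 : max φ.depth ψ.depth + 1 ≤ d := h1
    obtain ⟨d, rfl⟩ : ∃ d', d = d' + 1 := ⟨d - 1, by omega⟩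
    have ih1' := ih1 (fun q hq => hv q (Or.inl hq)) d (by omega) (by omega)
    have ih2' := ih2 (fun q hq => hv q (Or.inr hq)) d (by omega) (by omega)
    constructor
    · rintro ⟨π, h0, hπ, i, hψ, hφ⟩
      obtain ⟨t, ht, hs⟩ := eu_pres hNB hlN h2 (fun a b hc => (ih1' a b hc).1)
        (fun a b hc => (ih2' a b hc).1) i π b hπ (by rw [h0]; exact hab) hψ hφ
      exact eu_intro (K := GK Q p) ht hs
    · rintro ⟨π, h0, hπ, i, hψ, hφ⟩
      obtain ⟨t, ht, hs⟩ := eu_pres hNA hlN h2 (fun b a hc => (ih1' a b hc.symm).2)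
        (fun b a hc => (ih2' a b hc.symm).2) i π a hπ (by rw [h0]; exact hab.symm) hψ hφ
      exact eu_intro (K := GK P p) ht hs

end preserve

theorem exists_GP {Atom : Type u} (W : Set Atom) (K : Kripke Atom) {l0 l m : ℕ} (D : ℕ)
    (hl0 : 0 < l0) (hl : 0 < l) (dl : l0 ∣ l) (hm : Nat.card (Cyc W K l0 l) ≤ m) :
    Nonempty (GP W K l0 l D (l * (D + 3 + m))) := by
  have := Cyc.finite (W := W) (K := K) (l0 := l0) hl
  let f := Finite.equivFin (Cyc W K l0 l)
  refine ⟨⟨fun c => l * (D + 3 + f c), ?_, ?_, ?_, ?_, hl0, hl, dl, ?_, ?_⟩⟩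
  · intro c c' h
    have h1 : D + 3 + (f c : ℕ) = D + 3 + f c' := Nat.eq_of_mul_eq_mul_left hl h
    exact f.injective (Fin.ext (by omega))
  · exact fun c => Dvd.intro _ rfl
  · exact fun c => Nat.mul_le_mul_left _ (by omega)
  · intro c
    have := (f c).2
    exact Nat.mul_lt_mul_of_pos_left (by omega) hl
  · exact Dvd.intro _ rfl
  · exact Nat.mul_le_mul_left _ (by omega)

section repaint

variable {Atom : Type u} {W V : Set Atom} {K : InitKripke Atom} {l0 l D M : ℕ}

/-- Repainting of `p` in a structure along bisimilarity to the gadget structure. -/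
def repaint (P : GP W K.toKripke l0 l D M) (p : Atom) (V : Set Atom) (J : InitKripke Atom) :
    InitKripke Atom where
  State := J.State
  stateFinite := J.stateFinite
  stateNonempty := J.stateNonempty
  R := J.R
  serial := J.serial
  L := fun s => {q | (q ∈ J.L s ∧ q ≠ p) ∨
    (q = p ∧ ∃ a : GS P, VBisim V ⟨J.toKripke, s⟩ ⟨GK P p, a⟩ ∧ p ∈ K.L a.bs)}
  s0 := J.s0
  initial := J.initial

theorem repaint_p (P : GP W K.toKripke l0 l D M) (p : Atom) (V : Set Atom) (J : InitKripke Atom) :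
    VBisim {p} J.toKS (repaint P p V J).toKS := by
  refine VBisim.of_rel (A := J.toKripke) (B := (repaint P p V J).toKripke) (fun s t => s = t)
    ?_ ?_ ?_ rfl
  · rintro s t rfl
    ext q
    simp [repaint]
    tauto
  · rintro s t s' rfl h
    exact ⟨s', h, rfl⟩
  · rintro s t s' rfl h
    exact ⟨s', h, rfl⟩

theorem repaint_V (P : GP W K.toKripke l0 l D M) {p : Atom} {V : Set Atom} (hp : p ∉ V)
    (hper : ∀ u : K.State, Relation.TransGen K.R u u → ∃ c : Cyc W K.toKripke l0 l, c.c 0 = u)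
    {J : InitKripke Atom} (h : VBisim V J.toKS (GI P p).toKS) :
    VBisim V (repaint P p V J).toKS K.toKS := by
  refine VBisim.of_rel (A := (repaint P p V J).toKripke) (B := K.toKripke)
    (fun s t => ∃ a : GS P, VBisim V ⟨J.toKripke, s⟩ ⟨GK P p, a⟩ ∧ a.bs = t)
    ?_ ?_ ?_ ⟨GS.base K.s0, h, rfl⟩
  · rintro s t ⟨a, ha, rfl⟩
    ext q
    have hlab := Set.ext_iff.1 ha.label q
    change _ ↔ ((q ∈ K.L a.bs ∧ q ≠ p) ∨ (q = p ∧ a.rem = 0)) ∧ _ at hlab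
    change ((q ∈ J.L s ∧ q ≠ p) ∨
      (q = p ∧ ∃ a : GS P, VBisim V ⟨J.toKripke, s⟩ ⟨GK P p, a⟩ ∧ p ∈ K.L a.bs)) ∧ _ ↔ _
    by_cases hq : q = p
    · subst hq
      have : (∃ a : GS P, VBisim V ⟨J.toKripke, s⟩ ⟨GK P q, a⟩ ∧ q ∈ K.L a.bs) ↔
          q ∈ K.L a.bs := by
        constructor
        · rintro ⟨a', ha', hq⟩
          have hb : GB P q V a' a := VBisim.trans (VBisim.symm ha') ha
          rwa [hb.sep hp hper K.total] at hq
        · intro hq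
          exact ⟨a, ha, hq⟩
      simp [this]
    · simp only [hq, ne_eq, not_false_eq_true, and_true, false_and, or_false] at hlab ⊢
      exact hlab
  · rintro s t s' ⟨a, ha, rfl⟩ hs
    obtain ⟨a', h1, h2⟩ := VBisim.forth ha hs
    exact ⟨_, GR.bs h1, a', h2, rfl⟩
  · rintro s t t' ⟨a, ha, rfl⟩ ht
    obtain ⟨s', h1, h2⟩ := VBisim.back (A := J.toKripke) (B := GK P p) ha (GR.to_base ht)
    exact ⟨s', h1, _, h2, rfl⟩

end repaint

/-- Modularity: forgetting `{p} ∪ V` equals forgetting `p` first and then `V`. -/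
theorem forget_modularity {Atom : Type u} [Finite Atom] (φ : CTL Atom) (V : Set Atom)
    (p : Atom) (hp : p ∉ V) (ψ1 ψ2 ψ : CTL Atom)
    (h1 : IsForget φ {p} ψ1) (h2 : IsForget ψ1 V ψ2)
    (h : IsForget φ ({p} ∪ V) ψ) :
    CTLEquiv ψ ψ2 := by
  have m1 := Set.ext_iff.1 h1.2
  have m2 := Set.ext_iff.1 h2.2
  have m := Set.ext_iff.1 h.2
  refine Set.ext fun K => ⟨fun hK => ?_, fun hK => ?_⟩
  · obtain ⟨J, hJ, hb⟩ := (m K).1 hK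
    obtain ⟨l0, hl0, hw⟩ := exists_period K.R
    let N := max (Nat.card K.State) (Nat.card J.State)
    let l := l0 * N.factorial
    have hl : 0 < l := Nat.mul_pos hl0 (Nat.factorial_pos _)
    have dl : l0 ∣ l := Dvd.intro _ rfl
    let D := ψ2.depth
    let W : Set Atom := {p} ∪ V
    let k := max (Nat.card (Cyc W K.toKripke l0 l)) (Nat.card (Cyc W J.toKripke l0 l))
    obtain ⟨P⟩ := exists_GP W K.toKripke D hl0 hl dl (le_max_left _ _ : _ ≤ k)
    obtain ⟨Q⟩ := exists_GP W J.toKripke D hl0 hl dl (le_max_right _ _ : _ ≤ k)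
    have hper : ∀ u : K.State, Relation.TransGen K.R u u →
        ∃ c : Cyc W K.toKripke l0 l, c.c 0 = u := by
      intro u hu
      obtain ⟨w, hw0, hw1, hw2⟩ := hw u hu
      refine ⟨⟨w, hw1, ?_, fun n => by rw [hw2]⟩, hw0⟩
      intro n
      have hp : Function.Periodic w l0 := hw2
      have := hp.nat_mul N.factorial n
      rwa [Nat.cast_id, mul_comm] at this
    have hQ1 : GI Q p ∈ CTLMod ψ1 := (m1 _).2 ⟨J, hJ, (GK.bisim Q p (.base J.s0)).symm⟩
    have hQ2 : GI Q p ∈ CTLMod ψ2 := (m2 _).2 ⟨_, hQ1, VBisim.refl _ _⟩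
    have hP2 : GI P p ∈ CTLMod ψ2 := by
      refine (ctl_pres (P := Q) (Q := P) (N := N) (le_max_right _ _) (le_max_left _ _) rfl ψ2 ?_
        D le_rfl le_rfl (.base J.s0) (.base K.s0) ?_).1 hQ2
      · intro q hq
        by_cases hqp : q = p
        · exact Or.inr hqp
        · left
          rintro (h' | h')
          · exact hqp h'
          · have : q ∈ ψ2.vars ∩ V := ⟨hq, h'⟩
            rw [h2.1] at this
            exact this
      · have hD : l * (D + 1) ≤ l * (D + 3) := Nat.mul_le_mul_left _ (by omega)
        exact Or.inr ⟨tp_eq.2 hb, hD.trans Q.hM, hD.trans P.hM⟩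
    obtain ⟨J1, hJ1, hJb⟩ := (m2 _).1 hP2
    obtain ⟨J2, hJ2, hJb2⟩ := (m1 _).1 hJ1
    refine (m2 _).2 ⟨repaint P p V J1, (m1 _).2 ⟨J2, hJ2, hJb2.trans (repaint_p P p V J1)⟩, ?_⟩
    exact repaint_V P hp hper hJb
  · obtain ⟨J, hJ, hb⟩ := (m2 K).1 hK
    obtain ⟨J', hJ', hb'⟩ := (m1 J).1 hJ
    exact (m K).2 ⟨J', hJ', hb'.trans' hb⟩
end

section
/- (Commutativity) Let φ be a CTL formula and V_1, V_2 ⊆ 𝒜. If ψ_1 is a result of forgetting V_1 from φ, ψ_2 is a result of forgetting V_2 from ψ_1, and ψ is a result of forgetting V_1 ∪ V_2 from φ, then ψ ≡ ψ_2. -/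
universe u

namespace FC
open Relation

/-! ### Basic facts on V-bisimilarity -/

theorem BRel_label {Atom : Type u} {V : Set Atom} {n : ℕ} {K1 K2 : KStruct Atom}
    (h : BRel V n K1 K2) : K1.M.L K1.s \ V = K2.M.L K2.s \ V := by
  cases n with
  | zero => exact h
  | succ n => exact h.1

theorem BRel_pred {Atom : Type u} {V : Set Atom} {n : ℕ} : ∀ {K1 K2 : KStruct Atom},
    BRel V (n + 1) K1 K2 → BRel V n K1 K2 := by
  induction n with
  | zero => intro K1 K2 h; exact h.1
  | succ n ih =>
    intro K1 K2 h
    refine ⟨h.1, fun t1 ht => ?_, fun t2 ht => ?_⟩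
    · obtain ⟨t2, h2, h3⟩ := h.2.1 t1 ht
      exact ⟨t2, h2, ih h3⟩
    · obtain ⟨t1, h2, h3⟩ := h.2.2 t2 ht
      exact ⟨t1, h2, ih h3⟩

theorem BRel_mono {Atom : Type u} {V : Set Atom} {m n : ℕ} (hmn : m ≤ n) {K1 K2 : KStruct Atom}
    (h : BRel V n K1 K2) : BRel V m K1 K2 := by
  induction n, hmn using Nat.le_induction with
  | base => exact h
  | succ n _ ih => exact ih (BRel_pred h)

theorem BRel_symm {Atom : Type u} {V : Set Atom} {n : ℕ} : ∀ {K1 K2 : KStruct Atom},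
    BRel V n K1 K2 → BRel V n K2 K1 := by
  induction n with
  | zero => intro K1 K2 h; exact Eq.symm h
  | succ n ih =>
    intro K1 K2 h
    refine ⟨h.1.symm, fun t1 ht => ?_, fun t2 ht => ?_⟩
    · obtain ⟨t2, h2, h3⟩ := h.2.2 t1 ht
      exact ⟨t2, h2, ih h3⟩
    · obtain ⟨t1, h2, h3⟩ := h.2.1 t2 ht
      exact ⟨t1, h2, ih h3⟩

theorem BRel_trans {Atom : Type u} {V : Set Atom} {n : ℕ} : ∀ {K1 K2 K3 : KStruct Atom},
    BRel V n K1 K2 → BRel V n K2 K3 → BRel V n K1 K3 := by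
  induction n with
  | zero => intro K1 K2 K3 h h'; exact Eq.trans h h'
  | succ n ih =>
    intro K1 K2 K3 h h'
    refine ⟨h.1.trans h'.1, fun t1 ht => ?_, fun t3 ht => ?_⟩
    · obtain ⟨t2, h2, h3⟩ := h.2.1 t1 ht
      obtain ⟨t3, h4, h5⟩ := h'.2.1 t2 h2
      exact ⟨t3, h4, ih h3 h5⟩
    · obtain ⟨t2, h2, h3⟩ := h'.2.2 t3 ht
      obtain ⟨t1, h4, h5⟩ := h.2.2 t2 h2
      exact ⟨t1, h4, ih h5 h3⟩

/-- Coinduction principle. -/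
theorem VBisim_of_rel {Atom : Type u} {V : Set Atom} {M1 M2 : Kripke Atom}
    (Z : M1.State → M2.State → Prop)
    (hl : ∀ s t, Z s t → M1.L s \ V = M2.L t \ V)
    (hf : ∀ s t, Z s t → ∀ s', M1.R s s' → ∃ t', M2.R t t' ∧ Z s' t')
    (hb : ∀ s t, Z s t → ∀ t', M2.R t t' → ∃ s', M1.R s s' ∧ Z s' t')
    {s : M1.State} {t : M2.State} (h : Z s t) : VBisim V ⟨M1, s⟩ ⟨M2, t⟩ := by
  intro n
  induction n generalizing s t with
  | zero => exact hl s t h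
  | succ n ih =>
    refine ⟨hl s t h, fun s' hs => ?_, fun t' ht => ?_⟩
    · obtain ⟨t', h1, h2⟩ := hf s t h s' hs
      exact ⟨t', h1, ih h2⟩
    · obtain ⟨s', h1, h2⟩ := hb s t h t' ht
      exact ⟨s', h1, ih h2⟩

theorem VBisim_refl {Atom : Type u} (V : Set Atom) (K : KStruct Atom) : VBisim V K K :=
  VBisim_of_rel (M1 := K.M) (M2 := K.M) (fun s t => s = t) (fun s t h => by rw [h])
    (fun s t h s' hs => ⟨s', h ▸ hs, rfl⟩) (fun s t h s' hs => ⟨s', h ▸ hs, rfl⟩) rfl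

theorem VBisim_symm {Atom : Type u} {V : Set Atom} {K1 K2 : KStruct Atom}
    (h : VBisim V K1 K2) : VBisim V K2 K1 := fun n => BRel_symm (h n)

theorem VBisim_trans {Atom : Type u} {V : Set Atom} {K1 K2 K3 : KStruct Atom}
    (h : VBisim V K1 K2) (h' : VBisim V K2 K3) : VBisim V K1 K3 :=
  fun n => BRel_trans (h n) (h' n)

theorem VBisim_forth {Atom : Type u} {V : Set Atom} {M1 M2 : Kripke Atom}
    {s : M1.State} {t : M2.State} (h : VBisim V ⟨M1, s⟩ ⟨M2, t⟩) {s' : M1.State}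
    (hs : M1.R s s') : ∃ t', M2.R t t' ∧ VBisim V ⟨M1, s'⟩ ⟨M2, t'⟩ := by
  have h1 : ∀ n, ∃ t', M2.R t t' ∧ BRel V n ⟨M1, s'⟩ ⟨M2, t'⟩ := fun n => (h (n + 1)).2.1 s' hs
  choose f hf1 hf2 using h1
  obtain ⟨t', ht'⟩ := Finite.exists_infinite_fiber f
  rw [Set.infinite_coe_iff] at ht'
  obtain ⟨n0, hn0⟩ := ht'.nonempty
  refine ⟨t', ?_, fun n => ?_⟩
  · rw [← show f n0 = t' from hn0]; exact hf1 n0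
  · obtain ⟨m, hm, hlt⟩ := ht'.exists_gt n
    have := BRel_mono hlt.le (hf2 m)
    rwa [show f m = t' from hm] at this

theorem VBisim_label {Atom : Type u} {V : Set Atom} {M1 M2 : Kripke Atom}
    {s : M1.State} {t : M2.State} (h : VBisim V ⟨M1, s⟩ ⟨M2, t⟩) :
    M1.L s \ V = M2.L t \ V := h 0

theorem VBisim_mono {Atom : Type u} {V W : Set Atom} (hVW : V ⊆ W) {K1 K2 : KStruct Atom}
    (h : VBisim V K1 K2) : VBisim W K1 K2 := by
  refine VBisim_of_rel (M1 := K1.M) (M2 := K2.M) (fun s t => VBisim V ⟨K1.M, s⟩ ⟨K2.M, t⟩)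
    (fun s t hst => ?_) (fun s t hst s' hs => VBisim_forth hst hs) (fun s t hst t' ht => ?_) h
  · have := VBisim_label hst
    ext p
    have hp := Set.ext_iff.1 this p
    simp only [Set.mem_sdiff] at hp ⊢
    constructor
    · rintro ⟨h1, h2⟩; exact ⟨(hp.1 ⟨h1, fun h => h2 (hVW h)⟩).1, h2⟩
    · rintro ⟨h1, h2⟩; exact ⟨(hp.2 ⟨h1, fun h => h2 (hVW h)⟩).1, h2⟩
  · obtain ⟨s', h1, h2⟩ := VBisim_forth (VBisim_symm hst) ht
    exact ⟨s', h1, VBisim_symm h2⟩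

/-- The bisimulation class of a state. -/
def cls {Atom : Type u} (V : Set Atom) (M : Kripke Atom) (s : M.State) : Set (KStruct Atom) :=
  {K | VBisim V ⟨M, s⟩ K}

theorem cls_eq_iff {Atom : Type u} {V : Set Atom} {M1 M2 : Kripke Atom}
    {s : M1.State} {t : M2.State} : cls V M1 s = cls V M2 t ↔ VBisim V ⟨M1, s⟩ ⟨M2, t⟩ := by
  constructor
  · intro h
    have : (⟨M2, t⟩ : KStruct Atom) ∈ cls V M2 t := VBisim_refl V _
    rw [← h] at this
    exact this
  · intro h
    ext K
    exact ⟨fun hK => VBisim_trans (VBisim_symm h) hK, fun hK => VBisim_trans h hK⟩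

theorem cls_lift {Atom : Type u} {V : Set Atom} {M1 M2 : Kripke Atom}
    {s s' : M1.State} {t : M2.State} (h : cls V M1 s = cls V M2 t) (hs : M1.R s s') :
    ∃ t', M2.R t t' ∧ cls V M1 s' = cls V M2 t' := by
  obtain ⟨t', h1, h2⟩ := VBisim_forth (cls_eq_iff.1 h) hs
  exact ⟨t', h1, cls_eq_iff.2 h2⟩

/-! ### Paths -/

theorem exists_path {S : Type u} {R : S → S → Prop} (A : Set S)
    (hA : ∀ s ∈ A, ∃ t ∈ A, R s t) {s : S} (hs : s ∈ A) :
    ∃ π : ℕ → S, π 0 = s ∧ (∀ n, R (π n) (π (n + 1))) ∧ ∀ n, π n ∈ A := by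
  choose f hf1 hf2 using fun x : A => hA x.1 x.2
  let g : A → A := fun x => ⟨f x, hf1 x⟩
  refine ⟨fun n => (g^[n] ⟨s, hs⟩).1, rfl, fun n => ?_, fun n => (g^[n] ⟨s, hs⟩).2⟩
  simp only [Function.iterate_succ_apply']
  exact hf2 _

theorem path_cons {S : Type u} {R : S → S → Prop} {s t : S} (hst : R s t) (π : ℕ → S)
    (h0 : π 0 = t) (hπ : ∀ n, R (π n) (π (n + 1))) :
    ∃ π' : ℕ → S, π' 0 = s ∧ (∀ n, R (π' n) (π' (n + 1))) ∧ ∀ n, π' (n + 1) = π n := by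
  refine ⟨fun n => Nat.casesOn n s π, rfl, fun n => ?_, fun n => rfl⟩
  cases n with
  | zero => simpa [h0] using hst
  | succ n => exact hπ n

theorem exists_walk {S : Type u} {R : S → S → Prop} [Finite S]
    (hser : ∀ s, ∃ t, R s t)
    (htot : ∀ x y, ReflTransGen R x y ∨ ReflTransGen R y x)
    (s : S) (hs : ∀ x, ReflTransGen R s x) :
    ∃ π : ℕ → S, π 0 = s ∧ (∀ n, R (π n) (π (n + 1))) ∧ ∀ t, ∃ n, π n = t := by
  classical
  have key : ∀ n : ℕ, ∀ F : Finset S, F.card = n → ∀ s, (∀ x ∈ F, ReflTransGen R s x) →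
      ∃ π : ℕ → S, π 0 = s ∧ (∀ n, R (π n) (π (n + 1))) ∧ ∀ t ∈ F, ∃ n, π n = t := by
    intro n
    induction n with
    | zero =>
      intro F hF s _
      obtain ⟨π, h0, h1, _⟩ := exists_path (R := R) Set.univ
        (fun s _ => by obtain ⟨t, ht⟩ := hser s; exact ⟨t, trivial, ht⟩) (Set.mem_univ s)
      refine ⟨π, h0, h1, fun t ht => ?_⟩
      rw [Finset.card_eq_zero.1 hF] at ht
      simp at ht
    | succ n ih =>
      intro F hF s hsF
      have hmin : ∀ G : Finset S, G.Nonempty → ∃ y ∈ G, ∀ z ∈ G, ReflTransGen R y z := by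
        intro G hG
        induction hG using Finset.Nonempty.cons_induction with
        | singleton a => exact ⟨a, by simp, by simp [ReflTransGen.refl]⟩
        | cons a G ha hG ih2 =>
          obtain ⟨y, hy, hyz⟩ := ih2
          rcases htot y a with h | h
          · refine ⟨y, by simp [hy], fun z hz => ?_⟩
            rcases Finset.mem_cons.1 hz with rfl | hz
            · exact h
            · exact hyz z hz
          · refine ⟨a, by simp, fun z hz => ?_⟩
            rcases Finset.mem_cons.1 hz with rfl | hz
            · exact .refl
            · exact h.trans (hyz z hz)
      obtain ⟨y, hy, hyz⟩ := hmin F (Finset.card_pos.1 (by omega))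
      obtain ⟨π, h0, h1, h2⟩ := ih (F.erase y) (by rw [Finset.card_erase_of_mem hy, hF]; rfl) y
        (fun z hz => hyz z (Finset.mem_of_mem_erase hz))
      have h3 : ∀ t ∈ F, ∃ n, π n = t := by
        intro t ht
        by_cases hty : t = y
        · exact ⟨0, by rw [h0, hty]⟩
        · exact h2 t (Finset.mem_erase.2 ⟨hty, ht⟩)
      have hsy := hsF y hy
      clear hsF
      induction hsy using ReflTransGen.head_induction_on with
      | refl => exact ⟨π, h0, h1, h3⟩
      | head hab _ ih3 =>
        obtain ⟨π', g0, g1, g2⟩ := ih3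
        obtain ⟨π'', k0, k1, k2⟩ := path_cons hab π' g0 g1
        refine ⟨π'', k0, k1, fun t ht => ?_⟩
        obtain ⟨n, hn⟩ := g2 t ht
        exact ⟨n + 1, by rw [k2, hn]⟩
  have := Fintype.ofFinite S
  obtain ⟨π, h0, h1, h2⟩ := key _ Finset.univ rfl s (fun x _ => hs x)
  exact ⟨π, h0, h1, fun t => h2 t (Finset.mem_univ t)⟩

theorem path_reach {S : Type u} {R : S → S → Prop} (v : ℕ → S) {i j : ℕ} (hij : i ≤ j)
    (h : ∀ n, i ≤ n → n < j → R (v n) (v (n + 1))) : ReflTransGen R (v i) (v j) := by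
  induction j, hij using Nat.le_induction with
  | base => exact .refl
  | succ j hj ih =>
    exact (ih fun n h1 h2 => h n h1 (by omega)).tail (h j hj (by omega))

theorem transGen_or_eq {S : Type u} {R : S → S → Prop} {x y : S} (h : ReflTransGen R x y) :
    x = y ∨ TransGen R x y := by
  rcases reflTransGen_iff_eq_or_transGen.1 h with h | h
  · exact Or.inl h.symm
  · exact Or.inr h

/-- A cycle through `k`. -/
theorem exists_cycle {S : Type u} {R : S → S → Prop} {x y : S} (h : TransGen R x y) :
    ∃ n, 0 < n ∧ ∃ v : ℕ → S, v 0 = x ∧ v n = y ∧ ∀ i < n, R (v i) (v (i + 1)) := by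
  induction h using TransGen.head_induction_on with
  | @single a h =>
    refine ⟨1, one_pos, fun i => if i = 0 then a else y, by simp, by simp, fun i hi => ?_⟩
    obtain rfl : i = 0 := by omega
    simpa using h
  | @head a c hac _ ih =>
    obtain ⟨n, hn, v, h0, h1, h2⟩ := ih
    refine ⟨n + 1, by omega, fun i => Nat.casesOn i a v, rfl, h1, fun i hi => ?_⟩
    cases i with
    | zero => simpa [h0] using hac
    | succ i => exact h2 i (by omega)

theorem cycle_periodic {S : Type u} {R : S → S → Prop} {v : ℕ → S} {n : ℕ} (hn : 0 < n)
    (hv : v n = v 0) (h : ∀ i < n, R (v i) (v (i + 1))) (i : ℕ) :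
    R (v (i % n)) (v ((i + 1) % n)) := by
  have h1 := Nat.mod_lt i hn
  rw [← Nat.mod_add_mod]
  by_cases h2 : i % n + 1 = n
  · have := h (i % n) h1
    rw [h2] at this ⊢
    rw [Nat.mod_self, ← hv]; exact this
  · rw [Nat.mod_eq_of_lt (show i % n + 1 < n by omega)]
    exact h _ h1

/-- inductive version of until -/
inductive EUi {S : Type u} (R : S → S → Prop) (A B : S → Prop) : S → Prop
  | base {s} : B s → EUi R A B s
  | step {s t} : A s → R s t → EUi R A B t → EUi R A B s

theorem EUi_bind {S : Type u} {R : S → S → Prop} {A B B' : S → Prop} {s : S}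
    (h : EUi R A B s) (hB : ∀ x, B x → EUi R A B' x) : EUi R A B' s := by
  induction h with
  | base h => exact hB _ h
  | step h1 h2 _ ih => exact .step h1 h2 ih

theorem sat_EU_iff {Atom : Type u} (M : Kripke Atom) (φ ψ : CTL Atom) (s : M.State) :
    Sat M (.EU φ ψ) s ↔ EUi M.R (Sat M φ) (Sat M ψ) s := by
  constructor
  · rintro ⟨π, h0, h1, i, h2, h3⟩
    subst h0
    have : ∀ j, j ≤ i → EUi M.R (Sat M φ) (Sat M ψ) (π (i - j)) := by
      intro j
      induction j with
      | zero => intro _; exact .base h2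
      | succ j ih =>
        intro hj
        refine .step (h3 _ (by omega)) (h1 _) ?_
        rw [show i - (j + 1) + 1 = i - j by omega]
        exact ih (by omega)
    simpa using this i le_rfl
  · intro h
    induction h with
    | base h =>
      obtain ⟨π, h0, h1, _⟩ := exists_path (R := M.R) Set.univ
        (fun s _ => by obtain ⟨t, ht⟩ := M.serial s; exact ⟨t, trivial, ht⟩) (Set.mem_univ _)
      exact ⟨π, h0, h1, 0, by rw [h0]; exact h, by simp⟩
    | step ha hr _ ih =>
      obtain ⟨π, h0, h1, i, h2, h3⟩ := ih
      obtain ⟨π', k0, k1, k2⟩ := path_cons hr π h0 h1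
      refine ⟨π', k0, k1, i + 1, by rw [k2]; exact h2, fun j hj => ?_⟩
      cases j with
      | zero => rw [k0]; exact ha
      | succ j => rw [k2]; exact h3 j (by omega)

/-! ### The unfolding construction -/

/-- Global parameters. -/
structure Par (Atom : Type u) where
  V1 : Set Atom
  V2 : Set Atom
  q : Atom
  hq1 : q ∈ V1
  hq2 : q ∉ V2
  C : Type u
  finC : Finite C
  c0 : C
  num : C → ℕ
  num_inj : Function.Injective num
  num_pos : ∀ e, 1 ≤ num e
  B : ℕ
  num_le : ∀ e, num e ≤ B
  P : ℕ
  P_pos : 0 < P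
  L : ℕ
  hBL : B ≤ L
  hPL : P ≤ L

def Par.V {Atom : Type u} (p : Par Atom) : Set Atom := p.V1 ∪ p.V2

/-- A base structure. -/
structure Base {Atom : Type u} (p : Par Atom) where
  N : InitKripke Atom
  d1 : p.C → N.State
  d2 : p.C → N.State
  hd : ∀ (τ k : N.State) (e : p.C), ∃ c, c ≠ e ∧ d1 c = τ ∧ d2 c = k

inductive Raw (C S : Type u) : Type u
  | triv (k : S) : Raw C S
  | frec (c : C) : Raw C S
  | near (e : C) (w : ℕ → S) (a : ℕ) : Raw C S

section
variable {Atom : Type u} {p : Par Atom} (N : Base p)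

def Base.S : Type u := N.N.State

def Base.cl (s : N.N.State) : Set (KStruct Atom) := cls p.V N.N.toKripke s

def Base.kap : Raw p.C N.N.State → N.N.State
  | .triv k => k
  | .frec c => N.d2 c
  | .near _ w a => w a

def Base.Valid : Raw p.C N.N.State → Prop
  | .triv k => ¬ TransGen N.N.R k k
  | .frec c => TransGen N.N.R (N.d2 c) (N.d2 c)
  | .near _ w a => a ≤ p.L ∧ (∀ b, w b = w (min b p.L)) ∧
      (∀ b < p.L, N.N.R (w b) (w (b + 1))) ∧ TransGen N.N.R (w p.L) (w 0) ∧
      ∀ b, b + p.P ≤ p.L → N.cl (w (b + p.P)) = N.cl (w b)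

def Base.E (x : Raw p.C N.N.State) : Raw p.C N.N.State → Prop
  | .triv k => N.N.R (N.kap x) k
  | .frec c => N.N.R (N.kap x) (N.d2 c) ∧ ∀ e w a, x = .near e w a → N.d1 c = w a
  | .near e w b => (b = 0 ∧ ∃ c, x = .frec c ∧ c ≠ e ∧ N.N.R (N.d2 c) (w 0)) ∨
      ∃ a, x = .near e w a ∧ b = a + 1

def Base.lab (x : Raw p.C N.N.State) : Set Atom :=
  (N.N.L (N.kap x) \ p.V1) ∪ {r | r = p.q ∧ ∃ e w a, x = .near e w a ∧ p.L < a + p.num e}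

def Base.X : Type u := {x : Raw p.C N.N.State // N.Valid x}

def Base.IsNear (x : Raw p.C N.N.State) : Prop := ∃ e w a, x = .near e w a

theorem Base.finX : Finite N.X := by
  have := p.finC
  let f : N.X → N.N.State ⊕ p.C ⊕ (p.C × (Fin (p.L + 1) → N.N.State) × Fin (p.L + 1)) := fun x =>
    match x.1 with
    | .triv k => .inl k
    | .frec c => .inr (.inl c)
    | .near e w a => .inr (.inr (e, fun i => w i, Fin.ofNat (p.L + 1) a))
  refine Finite.of_injective f ?_
  rintro ⟨x, hx⟩ ⟨y, hy⟩ h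
  apply Subtype.ext
  cases x <;> cases y <;> simp only [f, Sum.inl.injEq, Sum.inr.injEq, reduceCtorEq,
    Prod.mk.injEq] at h ⊢
  · rw [h]
  · rw [h]
  · obtain ⟨rfl, h2, h3⟩ := h
    rename_i w a w' a'
    have h4 : w = w' := by
      funext b
      rw [hx.2.1 b, hy.2.1 b]
      exact congrFun h2 ⟨min b p.L, by omega⟩
    subst h4
    have h5 := congrArg Fin.val h3
    simp only [Fin.ofNat] at h5
    rw [Nat.mod_eq_of_lt (by have := hx.1; omega), Nat.mod_eq_of_lt (by have := hy.1; omega)] at h5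
    rw [h5]

variable {N}

theorem Base.near_reach {w : ℕ → N.N.State} (hw : ∀ b < p.L, N.N.R (w b) (w (b + 1))) {i j : ℕ}
    (hij : i ≤ j) (hj : j ≤ p.L) : ReflTransGen N.N.R (w i) (w j) :=
  path_reach w hij fun n _ h => hw n (by omega)

theorem Base.near_rec {e : p.C} {w : ℕ → N.N.State} {a : ℕ} (h : N.Valid (.near e w a)) :
    TransGen N.N.R (w a) (w a) := by
  obtain ⟨h1, _, h3, h4, _⟩ := h
  exact (TransGen.trans_right (near_reach h3 h1 le_rfl) h4).trans_left
    (near_reach h3 (Nat.zero_le a) h1)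

theorem Base.eq_triv {x : Raw p.C N.N.State} (hx : N.Valid x)
    (h : ¬ TransGen N.N.R (N.kap x) (N.kap x)) : x = .triv (N.kap x) := by
  cases x with
  | triv k => rfl
  | frec c => exact absurd hx h
  | near e w a => exact absurd (near_rec hx) h

theorem Base.E_proj {x y : Raw p.C N.N.State} (hy : N.Valid y) (h : N.E x y) :
    N.N.R (N.kap x) (N.kap y) := by
  cases y with
  | triv k => exact h
  | frec c => exact h.1
  | near e w b =>
    rcases h with ⟨rfl, c, rfl, _, h⟩ | ⟨a, rfl, rfl⟩
    · exact h
    · exact hy.2.2.1 a (by have := hy.1; omega)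

theorem Base.not_near_triv (k : N.N.State) : ¬ N.IsNear (.triv k) := by
  rintro ⟨_, _, _, h⟩; cases h

theorem Base.not_near_frec (c : p.C) : ¬ N.IsNear (.frec c) := by
  rintro ⟨_, _, _, h⟩; cases h

theorem Base.E_lift (x : Raw p.C N.N.State) {k : N.N.State} (h : N.N.R (N.kap x) k) :
    ∃ y, N.Valid y ∧ ¬ N.IsNear y ∧ N.kap y = k ∧ N.E x y := by
  by_cases hk : TransGen N.N.R k k
  · obtain ⟨c, _, h1, h2⟩ := N.hd (N.kap x) k p.c0
    subst h2
    refine ⟨.frec c, hk, not_near_frec c, rfl, h, ?_⟩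
    rintro e w a rfl
    exact h1
  · exact ⟨.triv k, hk, not_near_triv k, rfl, h⟩

variable (N)

/-- The unfolded structure. -/
def Base.hat : Kripke Atom where
  State := N.X
  stateFinite := N.finX
  stateNonempty := by
    by_cases h : TransGen N.N.R N.N.s0 N.N.s0
    · obtain ⟨c, _, _, h2⟩ := N.hd N.N.s0 N.N.s0 p.c0
      exact ⟨⟨.frec c, by rw [← h2] at h; exact h⟩⟩
    · exact ⟨⟨.triv N.N.s0, h⟩⟩
  R := fun x y => N.E x.1 y.1
  serial := by
    intro x
    obtain ⟨k, hk⟩ := N.N.serial (N.kap x.1)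
    obtain ⟨y, h1, _, _, h2⟩ := E_lift x.1 hk
    exact ⟨⟨y, h1⟩, h2⟩
  L := fun x => N.lab x.1

variable {N}

theorem Base.reach_far (x : N.X) {k : N.N.State} (h : TransGen N.N.R (N.kap x.1) k) :
    ∃ y : N.X, ¬ N.IsNear y.1 ∧ N.kap y.1 = k ∧ TransGen N.hat.R x y := by
  induction h with
  | single h =>
    obtain ⟨y, h1, h2, h3, h4⟩ := E_lift x.1 h
    exact ⟨⟨y, h1⟩, h2, h3, .single h4⟩
  | tail _ h ih =>
    obtain ⟨z, _, h5, h6⟩ := ih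
    rw [← h5] at h
    obtain ⟨y, h1, h2, h3, h4⟩ := E_lift z.1 h
    exact ⟨⟨y, h1⟩, h2, h3, .tail h6 h4⟩

theorem Base.reach (x y : N.X) (h : TransGen N.N.R (N.kap x.1) (N.kap y.1)) :
    TransGen N.hat.R x y := by
  have hfrec : ∀ (c : p.C) (hc : N.Valid (.frec c)), TransGen N.N.R (N.kap x.1) (N.d2 c) →
      TransGen N.hat.R x ⟨.frec c, hc⟩ := by
    intro c hc hx
    obtain ⟨r, hr1, hr2⟩ := TransGen.tail'_iff.1 (show TransGen N.N.R (N.d2 c) (N.d2 c) from hc)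
    obtain ⟨z, hz1, hz2, hz3⟩ := reach_far x (hx.trans_left hr1)
    refine hz3.tail ⟨by rw [hz2]; exact hr2, fun e w a hz => absurd ⟨e, w, a, hz⟩ hz1⟩
  obtain ⟨y, hy⟩ := y
  cases y with
  | triv k =>
    obtain ⟨r, hr1, hr2⟩ := TransGen.tail'_iff.1 h
    rcases transGen_or_eq hr1 with h1 | h1
    · exact .single (by rw [← h1] at hr2; exact hr2)
    · obtain ⟨z, _, hz2, hz3⟩ := reach_far x h1
      exact hz3.tail (by rw [← hz2] at hr2; exact hr2)
  | frec c => exact hfrec c hy h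
  | near e w b =>
    have hy' := hy
    obtain ⟨h1, h2, h3, h4, h5⟩ := hy'
    obtain ⟨r, hr1, hr2⟩ := TransGen.tail'_iff.1 h4
    obtain ⟨c, hc1, _, hc2⟩ := N.hd r r e
    subst hc2
    have hL : ReflTransGen N.N.R (w b) (N.d2 c) := (near_reach h3 h1 le_rfl).trans hr1
    have hc : N.Valid (.frec c) := by
      show TransGen N.N.R (N.d2 c) (N.d2 c)
      exact TransGen.head' hr2 ((near_reach h3 (Nat.zero_le _) h1).trans hL)
    have hx : TransGen N.hat.R x ⟨.frec c, hc⟩ := hfrec c hc (TransGen.trans_left h hL)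
    have : ∀ a (ha : a ≤ p.L), TransGen N.hat.R x ⟨.near e w a, ⟨ha, h2, h3, h4, h5⟩⟩ := by
      intro a
      induction a with
      | zero => intro ha; exact hx.tail (Or.inl ⟨rfl, c, rfl, hc1, hr2⟩)
      | succ a ih => intro ha; exact (ih (by omega)).tail (Or.inr ⟨a, rfl, rfl⟩)
    exact this b h1

theorem Base.reach' (x y : N.X) (h : ReflTransGen N.N.R (N.kap x.1) (N.kap y.1)) :
    ReflTransGen N.hat.R x y := by
  rcases transGen_or_eq h with h1 | h1
  · by_cases hr : TransGen N.N.R (N.kap x.1) (N.kap y.1)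
    · exact (reach x y hr).to_reflTransGen
    · have hx := eq_triv x.2 (by rw [← h1] at hr; exact hr)
      have hy := eq_triv y.2 (by rw [h1] at hr; exact hr)
      have : x = y := Subtype.ext (by rw [hx, hy, h1])
      exact this ▸ ReflTransGen.refl
  · exact (reach x y h1).to_reflTransGen

theorem Base.comparable (k k' : N.N.State) :
    ReflTransGen N.N.R k k' ∨ ReflTransGen N.N.R k' k := by
  obtain ⟨π, h0, h1, h2⟩ := N.N.initial
  obtain ⟨i, rfl⟩ := h2 k
  obtain ⟨j, rfl⟩ := h2 k'
  rcases le_total i j with h | h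
  · exact .inl (path_reach π h fun n _ _ => h1 n)
  · exact .inr (path_reach π h fun n _ _ => h1 n)

theorem Base.from_s0 (k : N.N.State) : ReflTransGen N.N.R N.N.s0 k := by
  obtain ⟨π, h0, h1, h2⟩ := N.N.initial
  obtain ⟨i, rfl⟩ := h2 k
  rw [← h0]
  exact path_reach π (Nat.zero_le i) fun n _ _ => h1 n

variable (N)

theorem Base.exists_start : ∃ x : N.X, N.kap x.1 = N.N.s0 ∧ ¬ N.IsNear x.1 := by
  by_cases h : TransGen N.N.R N.N.s0 N.N.s0
  · obtain ⟨c, _, _, h2⟩ := N.hd N.N.s0 N.N.s0 p.c0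
    exact ⟨⟨.frec c, by rw [← h2] at h; exact h⟩, h2, not_near_frec c⟩
  · exact ⟨⟨.triv N.N.s0, h⟩, rfl, not_near_triv _⟩

noncomputable def Base.start : N.X := N.exists_start.choose

theorem Base.start_kap : N.kap N.start.1 = N.N.s0 := N.exists_start.choose_spec.1

theorem Base.start_far : ¬ N.IsNear N.start.1 := N.exists_start.choose_spec.2

noncomputable def Base.ihat : InitKripke Atom where
  toKripke := N.hat
  s0 := N.start
  initial := by
    have : Finite N.hat.State := N.finX
    refine exists_walk N.hat.serial (fun x y => ?_) N.start (fun x => ?_)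
    · rcases comparable (N.kap x.1) (N.kap y.1) with h | h
      · exact .inl (reach' x y h)
      · exact .inr (reach' y x h)
    · exact reach' _ _ (by rw [start_kap]; exact from_s0 _)

theorem Base.hat_bisim (x : N.X) :
    VBisim p.V1 ⟨N.hat, x⟩ ⟨N.N.toKripke, N.kap x.1⟩ := by
  refine VBisim_of_rel (M1 := N.hat) (M2 := N.N.toKripke) (fun x k => N.kap x.1 = k)
    ?_ ?_ ?_ rfl
  · rintro x k rfl
    ext r
    simp only [Base.hat, Base.lab, Set.mem_sdiff, Set.mem_union, Set.mem_ofPred_eq]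
    constructor
    · rintro ⟨h | ⟨rfl, _⟩, h2⟩
      · exact h
      · exact absurd p.hq1 h2
    · rintro h
      exact ⟨.inl h, h.2⟩
  · rintro x k rfl y hxy
    exact ⟨_, E_proj y.2 hxy, rfl⟩
  · rintro x k rfl k' hk
    obtain ⟨y, h1, _, h3, h4⟩ := E_lift x.1 hk
    exact ⟨⟨y, h1⟩, h4, h3⟩

theorem Base.ihat_bisim : VBisim p.V1 N.ihat.toKS N.N.toKS := by
  have := N.hat_bisim N.start
  rw [start_kap] at this
  exact this

end

/-! ### CTL equivalence of unfoldings -/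

section
variable {Atom : Type u} {p : Par Atom}

def Base.farK (N : Base p) (k : ℕ) (x : N.X) : Prop :=
  ∀ e w a, x.1 = .near e w a → a + (p.B + k * p.P) ≤ p.L

theorem Base.farK_of {N : Base p} {k : ℕ} {x : N.X} (h : ¬ N.IsNear x.1) : N.farK k x :=
  fun e w a hx => absurd ⟨e, w, a, hx⟩ h

def nsame {N1 N2 : Base p} (x : N1.X) (y : N2.X) : Prop :=
  ∃ e w w' a, x.1 = .near e w a ∧ y.1 = .near e w' a ∧ ∀ b ≤ p.L, N1.cl (w b) = N2.cl (w' b)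

def Zk {N1 N2 : Base p} (k : ℕ) (x : N1.X) (y : N2.X) : Prop :=
  N1.cl (N1.kap x.1) = N2.cl (N2.kap y.1) ∧ (nsame x y ∨ (N1.farK k x ∧ N2.farK k y))

def Rel {N1 N2 : Base p} (k : ℕ) (A : N1.X → Prop) (x : N1.X) (y : N2.X) : Prop :=
  N1.cl (N1.kap x.1) = N2.cl (N2.kap y.1) ∧ (nsame x y ∨ (N1.farK k x ∧ N2.farK k y ∧
    ∀ e w a, x.1 = .near e w a → ∀ b < a, p.L ≤ b + (p.B + (k + 1) * p.P) →
      ∀ h : N1.Valid (.near e w b), A ⟨.near e w b, h⟩))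

theorem Zk_symm {N1 N2 : Base p} {k : ℕ} {x : N1.X} {y : N2.X} (h : Zk k x y) : Zk k y x := by
  refine ⟨h.1.symm, ?_⟩
  rcases h.2 with ⟨e, w, w', a, h1, h2, h3⟩ | h
  · exact .inl ⟨e, w', w, a, h2, h1, fun b hb => (h3 b hb).symm⟩
  · exact .inr ⟨h.2, h.1⟩

theorem Rel_Zk {N1 N2 : Base p} {k : ℕ} {A : N1.X → Prop} {x : N1.X} {y : N2.X}
    (h : Rel k A x y) : Zk k x y :=
  ⟨h.1, h.2.imp id fun h => ⟨h.1, h.2.1⟩⟩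

theorem Base.farK_pred {N : Base p} {k : ℕ} {x : N.X} (h : N.farK (k + 1) x) : N.farK k x := by
  intro e w a hx
  have := h e w a hx
  rw [Nat.add_one_mul] at this
  omega

theorem Zk_Rel {N1 N2 : Base p} {k : ℕ} {A : N1.X → Prop} {x : N1.X} {y : N2.X}
    (h : Zk (k + 1) x y) : Rel k A x y := by
  refine ⟨h.1, h.2.imp id fun h => ⟨N1.farK_pred h.1, N2.farK_pred h.2, ?_⟩⟩
  intro e w a hx b hb hL
  have := h.1 e w a hx
  omega

theorem near_cl_mod {N : Base p} {e : p.C} {w : ℕ → N.N.State} {a : ℕ}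
    (h : N.Valid (.near e w a)) (b : ℕ) (hb : b ≤ p.L) : N.cl (w b) = N.cl (w (b % p.P)) := by
  induction b using Nat.strong_induction_on with
  | _ b ih =>
    by_cases hbP : b < p.P
    · rw [Nat.mod_eq_of_lt hbP]
    · have hP := p.P_pos
      have h1 := h.2.2.2.2 (b - p.P) (by omega)
      rw [Nat.sub_add_cancel (by omega)] at h1
      rw [h1, ih (b - p.P) (by omega) (by omega), ← Nat.mod_eq_sub_mod (by omega)]

theorem walk_exists {N1 N2 : Base p} {e : p.C} {w : ℕ → N1.N.State} {a : ℕ}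
    (h : N1.Valid (.near e w a)) (s : N2.N.State) (n : ℕ)
    (hs : N2.cl s = N1.cl (w (n % p.P))) :
    ∃ v : ℕ → N2.N.State, v 0 = s ∧ (∀ i, N2.N.R (v i) (v (i + 1))) ∧
      ∀ i, N2.cl (v i) = N1.cl (w ((n + i) % p.P)) := by
  obtain ⟨π, h0, h1, h2⟩ := exists_path (S := ℕ × N2.N.State)
    (R := fun x y => y.1 = x.1 + 1 ∧ N2.N.R x.2 y.2)
    {x | N2.cl x.2 = N1.cl (w (x.1 % p.P))} (by
      rintro ⟨m, y⟩ hy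
      have hP := p.P_pos
      have hPL := p.hPL
      have hm := Nat.mod_lt m hP
      obtain ⟨y', hy1, hy2⟩ := cls_lift (V := p.V) (M1 := N1.N.toKripke) (M2 := N2.N.toKripke)
        (Eq.symm hy) (h.2.2.1 (m % p.P) (by omega))
      refine ⟨(m + 1, y'), ?_, rfl, hy1⟩
      show N2.cl y' = N1.cl (w ((m + 1) % p.P))
      rw [← Nat.mod_add_mod, ← near_cl_mod h _ (by omega)]
      exact hy2.symm) (s := (n, s)) hs
  have h3 : ∀ i, (π i).1 = n + i := by
    intro i
    induction i with
    | zero => rw [h0]; rfl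
    | succ i ih => rw [(h1 i).1, ih]; rfl
  refine ⟨fun i => (π i).2, by simp only [h0], fun i => (h1 i).2, fun i => ?_⟩
  have := h2 i
  rw [Set.mem_ofPred_eq, h3] at this
  exact this

theorem roam {N1 N2 : Base p} {k : ℕ} {e : p.C} {w : ℕ → N1.N.State} {a : ℕ}
    (h : N1.Valid (.near e w (a + 1))) (ha : a + (p.B + k * p.P) = p.L)
    (A' : N2.X → Prop) (s : N2.X) (hs : N2.cl (N2.kap s.1) = N1.cl (w a))
    (hA' : ∀ y : N2.X, N2.farK k y → ∀ b ≤ p.L, N2.cl (N2.kap y.1) = N1.cl (w b) → A' y) :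
    ∃ t : N2.X, N2.hat.R s t ∧ EUi N2.hat.R A'
      (fun y => ∃ w', y.1 = .near e w' (a + 1) ∧ ∀ b ≤ p.L, N1.cl (w b) = N2.cl (w' b)) t := by
  have hP := p.P_pos
  have hPL := p.hPL
  have haL : a + 1 ≤ p.L := h.1
  obtain ⟨v, hv0, hvR, hvc⟩ := walk_exists h (N2.kap s.1) a
    (by rw [hs, near_cl_mod h a (by omega)])
  -- pigeonhole
  have hn0 : a + 2 ≤ p.P * (a + 2) := Nat.le_mul_of_pos_left _ hP
  obtain ⟨n0, hn0'⟩ : ∃ n0, a + n0 = p.P * (a + 2) := ⟨p.P * (a + 2) - a, by omega⟩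
  have hpig : ∃ i j, i < j ∧ v (n0 + i * p.P) = v (n0 + j * p.P) := by
    obtain ⟨i, j, hij, hv⟩ := Finite.exists_ne_map_eq_of_infinite (fun i => v (n0 + i * p.P))
    rcases lt_or_gt_of_ne hij with h | h
    · exact ⟨i, j, h, hv⟩
    · exact ⟨j, i, h, hv.symm⟩
  obtain ⟨i, j, hij, hvij⟩ := hpig
  obtain ⟨n1, hn1⟩ : ∃ n1, n1 = n0 + i * p.P := ⟨_, rfl⟩
  obtain ⟨D, hD⟩ : ∃ D, D = (j - i) * p.P := ⟨_, rfl⟩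
  have hDpos : 0 < D := by rw [hD]; exact Nat.mul_pos (by omega) hP
  have hn2 : n0 + j * p.P = n1 + D := by
    rw [hn1, hD, add_assoc, ← Nat.add_mul]; congr 2; omega
  rw [← hn1, hn2] at hvij
  have hPD : p.P ∣ D := ⟨j - i, by rw [hD, mul_comm]⟩
  have hPn1 : p.P ∣ a + n1 := ⟨a + 2 + i, by rw [hn1, ← add_assoc, hn0']; ring⟩
  have hn12 : 2 ≤ n1 := by omega
  -- the new line
  obtain ⟨w', hw'⟩ : ∃ w' : ℕ → N2.N.State, w' = fun b => v (n1 + (min b p.L) % D) := ⟨_, rfl⟩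
  have hcyc := cycle_periodic (R := N2.N.R) (v := fun i => v (n1 + i)) hDpos hvij.symm
    (fun i _ => hvR (n1 + i))
  have hcl : ∀ b ≤ p.L, N1.cl (w b) = N2.cl (w' b) := by
    intro b hb
    rw [hw']
    simp only [min_eq_left hb]
    rw [hvc, near_cl_mod h b hb, ← add_assoc, Nat.add_mod (a + n1), Nat.mod_eq_zero_of_dvd hPn1,
      zero_add, Nat.mod_mod, Nat.mod_mod_of_dvd _ hPD]
  have hw0 : w' 0 = v n1 := by rw [hw']; simp
  have hvalid : ∀ b ≤ p.L, N2.Valid (.near e w' b) := by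
    intro b hb
    refine ⟨hb, fun b => ?_, fun b hb => ?_, ?_, fun b hb => ?_⟩
    · rw [hw']; simp
    · have := hcyc b
      rw [hw']
      simp only [min_eq_left hb.le, min_eq_left (show b + 1 ≤ p.L from hb)]
      exact this
    · have hr := Nat.mod_lt p.L hDpos
      rw [hw0, hvij]
      have : w' p.L = v (n1 + p.L % D) := by rw [hw']; simp
      rw [this]
      exact TransGen.head' (hvR _) (path_reach v (by omega) fun n _ _ => hvR n)
    · rw [← hcl _ hb, ← hcl b (by omega)]
      exact h.2.2.2.2 b hb
  -- backward construction
  let G : N2.X → Prop := fun y => ∃ w', y.1 = .near e w' (a + 1) ∧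
    ∀ b ≤ p.L, N1.cl (w b) = N2.cl (w' b)
  have st1 : ∀ r b (hb : b ≤ p.L), b + r = a + 1 →
      EUi N2.hat.R A' G ⟨.near e w' b, hvalid b hb⟩ := by
    intro r
    induction r with
    | zero =>
      intro b hb hr
      obtain rfl : b = a + 1 := by omega
      exact .base ⟨w', rfl, hcl⟩
    | succ r ih =>
      intro b hb hr
      refine .step ?_ ?_ (ih (b + 1) (by omega) (by omega))
      · refine hA' _ ?_ b hb (hcl b hb).symm
        intro e' w'' a' heq
        cases heq
        omega
      · exact Or.inr ⟨b, rfl, rfl⟩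
  have far_ok : ∀ (y : N2.X) n, ¬ N2.IsNear y.1 → N2.kap y.1 = v n → A' y := by
    intro y n hy hyn
    refine hA' y (N2.farK_of hy) ((a + n) % p.P) ?_ ?_
    · have := Nat.mod_lt (a + n) hP
      omega
    · rw [hyn, hvc]
  obtain ⟨m, hm⟩ : ∃ m, n1 + D = m + 2 := ⟨n1 + D - 2, by omega⟩
  have hm1 : 1 ≤ m := by omega
  obtain ⟨c, hc1, _, hc2⟩ := N2.hd (v (m + 1)) (v (m + 1)) e
  have hRc : N2.N.R (N2.d2 c) (w' 0) := by
    rw [hc2, hw0, hvij, hm]; exact hvR _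
  have hcv : N2.Valid (.frec c) := by
    show TransGen N2.N.R (N2.d2 c) (N2.d2 c)
    refine TransGen.head' hRc ?_
    rw [hc2, hw0]
    exact path_reach v (by omega) fun n _ _ => hvR n
  have st2 : EUi N2.hat.R A' G ⟨.frec c, hcv⟩ := by
    refine .step (far_ok _ (m + 1) (Base.not_near_frec c) hc2) ?_ (st1 (a + 1) 0 (by omega) (by omega))
    exact Or.inl ⟨rfl, c, rfl, hc1, hRc⟩
  have st3 : ∀ r n, n + r = m → ∀ y : N2.X, ¬ N2.IsNear y.1 → N2.kap y.1 = v n →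
      EUi N2.hat.R A' G y := by
    intro r
    induction r with
    | zero =>
      intro n hn y hy hyn
      obtain rfl : n = m := by omega
      refine .step (far_ok y n hy hyn) ?_ st2
      refine ⟨?_, fun e' w'' a' hz => absurd ⟨e', w'', a', hz⟩ hy⟩
      rw [hyn, hc2]; exact hvR n
    | succ r ih =>
      intro n hn y hy hyn
      have hR := hvR n
      rw [← hyn] at hR
      obtain ⟨z, hz1, hz2, hz3, hz4⟩ := Base.E_lift y.1 hR
      exact .step (t := ⟨z, hz1⟩) (far_ok y n hy hyn) hz4
        (ih (n + 1) (by omega) ⟨z, hz1⟩ hz2 hz3)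
  have hR := hvR 0
  rw [hv0] at hR
  obtain ⟨z, hz1, hz2, hz3, hz4⟩ := Base.E_lift s.1 hR
  exact ⟨⟨z, hz1⟩, hz4, st3 (m - 1) 1 (by omega) ⟨z, hz1⟩ hz2 hz3⟩

theorem step_lemma {N1 N2 : Base p} {k : ℕ} (hk : p.B + (k + 1) * p.P ≤ p.L)
    {A : N1.X → Prop} {A' : N2.X → Prop}
    (hAA : ∀ (x : N1.X) (y : N2.X), A x → Zk k x y → A' y)
    {s t : N1.X} {s' : N2.X} (hrel : Rel k A s s') (hAs : A s) (hst : N1.hat.R s t) :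
    ∃ t' : N2.X, N2.hat.R s' t' ∧ EUi N2.hat.R A' (fun y => Rel k A t y) t' := by
  have hkk : (k + 1) * p.P = k * p.P + p.P := Nat.add_one_mul _ _
  have hP := p.P_pos
  obtain ⟨k', hk'1, hk'2⟩ := cls_lift (V := p.V) (M1 := N1.N.toKripke) (M2 := N2.N.toKripke)
    hrel.1 (Base.E_proj t.2 hst)
  -- generic far lift
  have lift : N1.farK k t → (∀ e w a, t.1 = .near e w a → ∀ b < a,
      p.L ≤ b + (p.B + (k + 1) * p.P) → ∀ h : N1.Valid (.near e w b), A ⟨.near e w b, h⟩) →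
      ∃ t' : N2.X, N2.hat.R s' t' ∧ EUi N2.hat.R A' (fun y => Rel k A t y) t' := by
    intro hf hinv
    obtain ⟨y, hy1, hy2, hy3, hy4⟩ := Base.E_lift s'.1 hk'1
    refine ⟨⟨y, hy1⟩, hy4, .base ⟨?_, .inr ⟨hf, N2.farK_of hy2, hinv⟩⟩⟩
    rw [hy3]; exact hk'2
  by_cases htn : N1.IsNear t.1
  · obtain ⟨s, hs⟩ := s
    obtain ⟨t, ht⟩ := t
    obtain ⟨e, w, b, htn⟩ := htn
    have htn : t = .near e w b := htn
    subst htn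
    rcases hst with ⟨rfl, c, hsc, _, _⟩ | ⟨a, hsa, rfl⟩
    · refine lift ?_ ?_
      · intro e' w' a' heq
        cases heq
        omega
      · intro e' w' a' heq b hb
        cases heq
        omega
    · have hsa : s = .near e w a := hsa
      subst hsa
      rcases hrel.2 with ⟨e1, w1, w2, a1, h1, h2, h3⟩ | ⟨h1, h2, h3⟩
      · cases h1
        obtain ⟨s', hs'⟩ := s'
        have h2 : s' = .near e w2 a := h2
        subst h2
        have hv : N2.Valid (.near e w2 (a + 1)) := ⟨ht.1, hs'.2⟩
        exact ⟨⟨_, hv⟩, Or.inr ⟨a, rfl, rfl⟩,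
          .base ⟨h3 _ ht.1, .inl ⟨e, w, w2, a + 1, rfl, rfl, h3⟩⟩⟩
      · have hfa := h1 e w a rfl
        by_cases hle : a + 1 + (p.B + k * p.P) ≤ p.L
        · refine lift ?_ ?_
          · intro e' w' a' heq
            cases heq
            exact hle
          · intro e' w' a' heq b hb hL hv
            cases heq
            by_cases hba : b = a
            · subst hba; exact hAs
            · exact h3 e w a rfl b (by omega) hL hv
        · have hwin : ∀ b, b ≤ a → a < b + p.P → ∀ hv : N1.Valid (.near e w b),
              A ⟨.near e w b, hv⟩ := by
            intro b hb1 hb2 hv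
            by_cases hba : b = a
            · subst hba; exact hAs
            · exact h3 e w a rfl b (by omega) (by omega) hv
          obtain ⟨t', ht'1, ht'2⟩ := roam (k := k) ht (by omega) A' s' hrel.1.symm (by
            intro y hy b hb hyb
            -- representative of b in the window
            obtain ⟨b', hb'1, hb'2, hb'3⟩ : ∃ b', b' ≤ a ∧ a < b' + p.P ∧
                b' % p.P = b % p.P := by
              have h5 := Nat.mod_lt (a + (p.P - b % p.P)) hP
              have h6 := Nat.mod_lt b hP
              have h7 := Nat.div_add_mod (a + (p.P - b % p.P)) p.P
              have h8 : p.P ≤ a + 1 := by omega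
              refine ⟨a - (a + (p.P - b % p.P)) % p.P, by omega, by omega, ?_⟩
              generalize (a + (p.P - b % p.P)) % p.P = r at *
              generalize (a + (p.P - b % p.P)) / p.P = q at *
              have h9 : a - r + p.P = b % p.P + p.P * q := by omega
              rw [← Nat.add_mod_right, h9, Nat.add_mul_mod_self_left, Nat.mod_mod]
            have hv : N1.Valid (.near e w b') := ⟨by omega, ht.2⟩
            refine hAA ⟨.near e w b', hv⟩ y (hwin b' hb'1 hb'2 hv) ⟨?_, .inr ⟨?_, hy⟩⟩
            · rw [hyb, near_cl_mod ht b hb, ← hb'3, ← near_cl_mod ht b' (by omega)]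
              rfl
            · intro e' w' a' heq
              cases heq
              omega)
          refine ⟨t', ht'1, EUi_bind ht'2 ?_⟩
          rintro ⟨x, hx⟩ ⟨w', hw'1, hw'2⟩
          have hw'1 : x = .near e w' (a + 1) := hw'1
          subst hw'1
          exact .base ⟨hw'2 _ ht.1, .inl ⟨e, w, w', a + 1, rfl, rfl, hw'2⟩⟩
  · exact lift (N1.farK_of htn) fun e w a h => absurd ⟨e, w, a, h⟩ htn

theorem ex_lemma {N1 N2 : Base p} {k : ℕ} (hk : p.B + (k + 1) * p.P ≤ p.L)
    {s t : N1.X} {s' : N2.X} (hZ : Zk (k + 1) s s') (hst : N1.hat.R s t) :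
    ∃ t' : N2.X, N2.hat.R s' t' ∧ Zk k t t' := by
  have hkk : (k + 1) * p.P = k * p.P + p.P := Nat.add_one_mul _ _
  have hP := p.P_pos
  obtain ⟨k', hk'1, hk'2⟩ := cls_lift (V := p.V) (M1 := N1.N.toKripke) (M2 := N2.N.toKripke)
    hZ.1 (Base.E_proj t.2 hst)
  have lift : N1.farK k t → ∃ t' : N2.X, N2.hat.R s' t' ∧ Zk k t t' := by
    intro hf
    obtain ⟨y, hy1, hy2, hy3, hy4⟩ := Base.E_lift s'.1 hk'1
    refine ⟨⟨y, hy1⟩, hy4, ?_, .inr ⟨hf, N2.farK_of hy2⟩⟩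
    rw [hy3]; exact hk'2
  by_cases htn : N1.IsNear t.1
  · obtain ⟨s, hs⟩ := s
    obtain ⟨t, ht⟩ := t
    obtain ⟨e, w, b, htn⟩ := htn
    have htn : t = .near e w b := htn
    subst htn
    rcases hst with ⟨rfl, c, hsc, _, _⟩ | ⟨a, hsa, rfl⟩
    · refine lift ?_
      intro e' w' a' heq
      cases heq
      omega
    · have hsa : s = .near e w a := hsa
      subst hsa
      rcases hZ.2 with ⟨e1, w1, w2, a1, h1, h2, h3⟩ | ⟨h1, h2⟩
      · cases h1
        obtain ⟨s', hs'⟩ := s'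
        have h2 : s' = .near e w2 a := h2
        subst h2
        have hv : N2.Valid (.near e w2 (a + 1)) := ⟨ht.1, hs'.2⟩
        exact ⟨⟨_, hv⟩, Or.inr ⟨a, rfl, rfl⟩, h3 _ ht.1, .inl ⟨e, w, w2, a + 1, rfl, rfl, h3⟩⟩
      · have hfa := h1 e w a rfl
        refine lift ?_
        intro e' w' a' heq
        cases heq
        omega
  · exact lift (N1.farK_of htn)

def dep : CTL Atom → ℕ
  | .bot => 0
  | .top => 0
  | .atom _ => 0
  | .neg φ => dep φ
  | .or φ ψ => max (dep φ) (dep ψ)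
  | .EX φ => dep φ + 1
  | .EG φ => dep φ + 1
  | .EU φ ψ => max (dep φ) (dep ψ) + 1

theorem hat_lab {N1 N2 : Base p} {k : ℕ} {x : N1.X} {y : N2.X} (h : Zk k x y) {r : Atom}
    (hr : r ∉ p.V2) (hx : r ∈ N1.hat.L x) : r ∈ N2.hat.L y := by
  rcases hx with ⟨h1, h2⟩ | ⟨rfl, e, w, a, h1, h2⟩
  · left
    have := Set.ext_iff.1 (VBisim_label (cls_eq_iff.1 h.1)) r
    simp only [Set.mem_sdiff, Par.V, Set.mem_union] at this
    exact ⟨(this.1 ⟨h1, by tauto⟩).1, h2⟩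
  · right
    rcases h.2 with ⟨e', w1, w2, a', h3, h4, _⟩ | ⟨h3, _⟩
    · rw [h1] at h3
      cases h3
      exact ⟨rfl, e, w2, a, h4, h2⟩
    · have := h3 e w a h1
      have := p.num_le e
      omega

theorem sat_transfer (φ : CTL Atom) : CTL.vars φ ∩ p.V2 = ∅ → ∀ k, dep φ ≤ k →
    p.B + k * p.P ≤ p.L → ∀ (N1 N2 : Base p) (x : N1.X) (y : N2.X), Zk k x y →
    Sat N1.hat φ x → Sat N2.hat φ y := by
  induction φ with
  | bot => intro _ k _ _ N1 N2 x y _ h; exact h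
  | top => intro _ k _ _ N1 N2 x y _ _; trivial
  | atom r =>
    intro hv k _ _ N1 N2 x y hZ h
    refine hat_lab hZ (fun hr => ?_) h
    have : r ∈ (∅ : Set Atom) := hv ▸ ⟨rfl, hr⟩
    exact this
  | neg φ ih =>
    intro hv k hk hL N1 N2 x y hZ h h2
    exact h (ih hv k hk hL N2 N1 y x (Zk_symm hZ) h2)
  | or φ ψ ih1 ih2 =>
    intro hv k hk hL N1 N2 x y hZ h
    have hv' := hv
    rw [CTL.vars, Set.union_inter_distrib_right, Set.union_empty_iff] at hv'
    have := max_le_iff.1 hk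
    exact h.imp (ih1 hv'.1 k this.1 hL N1 N2 x y hZ) (ih2 hv'.2 k this.2 hL N1 N2 x y hZ)
  | EX φ ih =>
    intro hv k hk hL N1 N2 x y hZ h
    obtain ⟨k, rfl⟩ : ∃ k', k = k' + 1 := ⟨k - 1, by simp only [dep] at hk; omega⟩
    simp only [dep] at hk
    have hL' : p.B + k * p.P ≤ p.L := by rw [Nat.add_one_mul] at hL; omega
    obtain ⟨t, ht1, ht2⟩ := h
    obtain ⟨t', ht3, ht4⟩ := ex_lemma hL hZ ht1
    exact ⟨t', ht3, ih hv k (by omega) hL' N1 N2 t t' ht4 ht2⟩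
  | EG φ ih =>
    intro hv k hk hL N1 N2 x y hZ h
    obtain ⟨k, rfl⟩ : ∃ k', k = k' + 1 := ⟨k - 1, by simp only [dep] at hk; omega⟩
    simp only [dep] at hk
    have hL' : p.B + k * p.P ≤ p.L := by rw [Nat.add_one_mul] at hL; omega
    obtain ⟨π, h0, h1, h2⟩ := h
    have hAA := ih hv k (by omega) hL' N1 N2
    obtain ⟨π', g0, g1, g2⟩ := exists_path (R := N2.hat.R)
      {s | EUi N2.hat.R (Sat N2.hat φ)
        (fun y => ∃ n, Rel k (Sat N1.hat φ) (show N1.X from π n) y) s ∧ Sat N2.hat φ s} (s := y) (by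
        rintro s ⟨hs, hs'⟩
        have good : ∀ t : N2.X, EUi N2.hat.R (Sat N2.hat φ)
            (fun y => ∃ n, Rel k (Sat N1.hat φ) (show N1.X from π n) y) t → Sat N2.hat φ t := by
          intro t ht
          cases ht with
          | base h => obtain ⟨n, hn⟩ := h; exact hAA _ _ (Rel_Zk hn) (h2 n)
          | step h _ _ => exact h
        cases hs with
        | base h =>
          obtain ⟨n, hn⟩ := h
          obtain ⟨t', ht1, ht2⟩ := step_lemma hL (A := Sat N1.hat φ) (A' := Sat N2.hat φ)
            (fun x y hx hz => hAA x y hz hx) hn (h2 n) (h1 n)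
          have := EUi_bind ht2 (B' := fun y => ∃ n, Rel k (Sat N1.hat φ) (show N1.X from π n) y)
            (fun x hx => .base ⟨n + 1, hx⟩)
          exact ⟨t', ⟨this, good t' this⟩, ht1⟩
        | step h hr ht => exact ⟨_, ⟨ht, good _ ht⟩, hr⟩)
      ⟨.base ⟨0, by rw [h0]; exact Zk_Rel hZ⟩, hAA _ _ (Rel_Zk (Zk_Rel (A := fun _ => True) hZ)) (h0 ▸ h2 0)⟩
    exact ⟨π', g0, g1, fun n => (g2 n).2⟩
  | EU φ ψ ih1 ih2 =>
    intro hv k hk hL N1 N2 x y hZ h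
    obtain ⟨k, rfl⟩ : ∃ k', k = k' + 1 := ⟨k - 1, by simp only [dep] at hk; omega⟩
    simp only [dep] at hk
    have hL' : p.B + k * p.P ≤ p.L := by rw [Nat.add_one_mul] at hL; omega
    have hv' := hv
    rw [CTL.vars, Set.union_inter_distrib_right, Set.union_empty_iff] at hv'
    have hA := ih1 hv'.1 k (by omega) hL' N1 N2
    have hB := ih2 hv'.2 k (by omega) hL' N1 N2
    replace h := (sat_EU_iff _ _ _ _).1 h
    refine (sat_EU_iff _ _ _ _).2 ?_
    have hrel : Rel k (Sat N1.hat φ) x y := Zk_Rel hZ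
    clear hZ
    induction h generalizing y with
    | base h => exact .base (hB _ _ (Rel_Zk hrel) h)
    | step h1 h2 _ ih =>
      obtain ⟨t', ht1, ht2⟩ := step_lemma hL (A := Sat N1.hat φ) (A' := Sat N2.hat φ)
            (fun x y hx hz => hA x y hz hx) hrel h1 h2
      exact .step (hA _ _ (Rel_Zk hrel) h1) ht1 (EUi_bind ht2 fun x hx => ih x hx)

end

/-! ### Rigidity -/

section
variable {Atom : Type u} {p : Par Atom} {N : Base p}

/-- Bisimilarity in the unfolded structure. -/
def Base.bs (N : Base p) (x y : N.X) : Prop := VBisim p.V2 ⟨N.hat, x⟩ ⟨N.hat, y⟩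

/-- All recurrent states lie on closed walks of length `P`. -/
def Base.Per (N : Base p) : Prop := ∀ k, TransGen N.N.R k k → ∃ v : ℕ → N.N.State, v 0 = k ∧
  (∀ n, N.N.R (v n) (v (n + 1))) ∧ ∀ n, v (n + p.P) = v n

theorem q_iff (x : N.X) :
    p.q ∈ N.hat.L x ↔ ∃ e w a, x.1 = .near e w a ∧ p.L < a + p.num e := by
  constructor
  · rintro (⟨_, h⟩ | ⟨_, h⟩)
    · exact absurd p.hq1 h
    · exact h
  · intro h
    exact .inr ⟨rfl, h⟩

theorem bs_symm {x y : N.X} (h : N.bs x y) : N.bs y x := VBisim_symm h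

theorem bs_trans {x y z : N.X} (h : N.bs x y) (h' : N.bs y z) : N.bs x z := VBisim_trans h h'

theorem bs_forth {x y x' : N.X} (h : N.bs x y) (hx : N.E x.1 x'.1) :
    ∃ y' : N.X, N.E y.1 y'.1 ∧ N.bs x' y' := VBisim_forth (M1 := N.hat) (M2 := N.hat) h hx

theorem bs_q {x y : N.X} (h : N.bs x y) :
    (∃ e w a, x.1 = .near e w a ∧ p.L < a + p.num e) →
    ∃ e w a, y.1 = .near e w a ∧ p.L < a + p.num e := by
  rw [← q_iff, ← q_iff]
  intro hx
  have := Set.ext_iff.1 (VBisim_label h) p.q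
  exact (this.1 ⟨hx, p.hq2⟩).1

theorem near_rigid : ∀ r a, a + r = p.L → ∀ e w (y x : N.X), x.1 = .near e w a → N.bs x y →
    ∃ e' w', y.1 = .near e' w' a := by
  intro r
  induction r with
  | zero =>
    intro a ha e w y x hx h
    obtain rfl : a = p.L := ha
    obtain ⟨e', w', a', hy, hlt⟩ := bs_q h ⟨e, w, p.L, hx, by have := p.num_pos e; omega⟩
    have hyv := y.2
    rw [hy] at hyv
    by_cases ha' : a' = p.L
    · exact ⟨e', w', by rw [hy, ha']⟩
    · exfalso
      have hv : N.Valid (.near e' w' (a' + 1)) := ⟨by have := hyv.1; omega, hyv.2⟩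
      obtain ⟨z, hz1, hz2⟩ := bs_forth (x' := ⟨_, hv⟩) (bs_symm h) (Or.inr ⟨a', hy, rfl⟩)
      obtain ⟨e2, w2, a2, hz, _⟩ := bs_q hz2 ⟨e', w', a' + 1, rfl, by omega⟩
      have hzv := z.2
      rw [hz] at hz1 hzv
      rw [hx] at hz1
      rcases hz1 with ⟨_, c, hc, _⟩ | ⟨b, hb, rfl⟩
      · cases hc
      · cases hb
        have := hzv.1
        omega
  | succ r ih =>
    intro a ha e w y x hx h
    have hxv := x.2
    rw [hx] at hxv
    have hv : N.Valid (.near e w (a + 1)) := ⟨by omega, hxv.2⟩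
    obtain ⟨z, hz1, hz2⟩ := bs_forth (x' := ⟨_, hv⟩) h (Or.inr ⟨a, hx, rfl⟩)
    obtain ⟨e', w', hz⟩ := ih (a + 1) (by omega) e w z _ rfl hz2
    rw [hz] at hz1
    rcases hz1 with ⟨h0, _⟩ | ⟨b, hb, hb'⟩
    · omega
    · obtain rfl : a = b := by omega
      exact ⟨e', w', hb⟩

theorem near_rigid' {e : p.C} {w : ℕ → N.N.State} {a : ℕ} {x y : N.X}
    (hx : x.1 = .near e w a) (h : N.bs x y) : ∃ e' w', y.1 = .near e' w' a := by
  have hxv := x.2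
  rw [hx] at hxv
  exact near_rigid (p.L - a) a (by have := hxv.1; omega) e w y x hx h

theorem entry (hN : N.Per) {c e : p.C} (hc : N.Valid (.frec c)) (hce : c ≠ e) :
    ∃ y : N.X, (∃ w, y.1 = .near e w 0) ∧ N.E (.frec c) y.1 := by
  obtain ⟨v, h0, h1, h2⟩ := hN (N.d2 c) hc
  have hper : ∀ n m, v (m + n * p.P) = v m := by
    intro n
    induction n with
    | zero => intro m; simp
    | succ n ih => intro m; rw [Nat.add_one_mul, ← add_assoc, h2, ih]
  refine ⟨⟨.near e (fun b => v (min b p.L + 1)) 0, Nat.zero_le _, fun b => ?_, fun b hb => ?_,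
    ?_, fun b hb => ?_⟩, ⟨_, rfl⟩, Or.inl ⟨rfl, c, rfl, hce, ?_⟩⟩
  · simp
  · simp only [min_eq_left hb.le, min_eq_left (show b + 1 ≤ p.L from hb)]
    exact h1 _
  · simp only [min_self, Nat.zero_min]
    rw [← hper (p.L + 1) (0 + 1)]
    have : p.L + 1 ≤ (p.L + 1) * p.P := Nat.le_mul_of_pos_right _ p.P_pos
    exact TransGen.head' (h1 _) (path_reach v (by omega) fun n _ _ => h1 n)
  · simp only [min_eq_left hb, min_eq_left (show b ≤ p.L by omega)]
    rw [add_right_comm, h2]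
  · simp only [Nat.zero_min]
    have := h1 0
    rw [h0] at this
    exact this

theorem frec_rigid (hN : N.Per) {c : p.C} {x y : N.X} (hx : x.1 = .frec c) (h : N.bs x y) :
    ∃ c', y.1 = .frec c' := by
  have hxv := x.2
  rw [hx] at hxv
  obtain ⟨e, he, _⟩ := N.hd (N.d2 c) (N.d2 c) c
  obtain ⟨z, ⟨w, hz⟩, hz2⟩ := entry hN hxv he.symm
  rw [← hx] at hz2
  obtain ⟨z', hz3, hz4⟩ := bs_forth h hz2
  obtain ⟨e', w', hz'⟩ := near_rigid' hz hz4
  rw [hz'] at hz3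
  rcases hz3 with ⟨_, c', hc', _⟩ | ⟨b, _, hb⟩
  · exact ⟨c', hc'⟩
  · omega

theorem follow {e e' : p.C} {w w' : ℕ → N.N.State} {x y : N.X} (hx : x.1 = .near e w 0)
    (hy : y.1 = .near e' w' 0) (h : N.bs x y) : ∀ a, a ≤ p.L →
    ∃ x' y' : N.X, x'.1 = .near e w a ∧ y'.1 = .near e' w' a ∧ N.bs x' y' := by
  intro a
  induction a with
  | zero => intro _; exact ⟨x, y, hx, hy, h⟩
  | succ a ih =>
    intro ha
    obtain ⟨x', y', hx', hy', h'⟩ := ih (by omega)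
    have hxv := x'.2
    rw [hx'] at hxv
    have hv : N.Valid (.near e w (a + 1)) := ⟨by omega, hxv.2⟩
    obtain ⟨z, hz1, hz2⟩ := bs_forth (x' := ⟨_, hv⟩) h' (Or.inr ⟨a, hx', rfl⟩)
    obtain ⟨e2, w2, hz⟩ := near_rigid' (x := ⟨_, hv⟩) rfl hz2
    refine ⟨⟨_, hv⟩, z, rfl, ?_, hz2⟩
    rw [hz, hy'] at hz1
    rcases hz1 with ⟨h0, _⟩ | ⟨b, hb, _⟩
    · omega
    · cases hb
      exact hz

theorem follow_num {e e' : p.C} {w w' : ℕ → N.N.State} {x y : N.X} (hx : x.1 = .near e w 0)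
    (hy : y.1 = .near e' w' 0) (h : N.bs x y) : p.num e ≤ p.num e' := by
  have h1 := p.num_pos e
  have h2 := p.num_le e
  have h3 := p.hBL
  obtain ⟨x', y', hx', hy', h'⟩ := follow hx hy h (p.L + 1 - p.num e) (by omega)
  obtain ⟨e2, w2, a2, h4, h5⟩ := bs_q h' ⟨e, w, _, hx', by omega⟩
  rw [hy'] at h4
  cases h4
  omega

theorem frec_eq (hN : N.Per) {c c' : p.C} {x y : N.X} (hx : x.1 = .frec c) (hy : y.1 = .frec c')
    (h : N.bs x y) : c = c' := by
  by_contra hne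
  have hyv := y.2
  rw [hy] at hyv
  obtain ⟨z, ⟨w, hz⟩, hz2⟩ := entry hN (e := c) hyv (Ne.symm hne)
  rw [← hy] at hz2
  obtain ⟨z', hz3, hz4⟩ := bs_forth (bs_symm h) hz2
  obtain ⟨e', w', hz'⟩ := near_rigid' hz hz4
  rw [hz', hx] at hz3
  rcases hz3 with ⟨_, c', hc', hce, _⟩ | ⟨b, _, hb⟩
  · cases hc'
    exact hce (p.num_inj (le_antisymm (follow_num hz hz' hz4) (follow_num hz' hz (bs_symm hz4))))
  · omega

theorem near_kap (hN : N.Per) {e : p.C} {w : ℕ → N.N.State} {a : ℕ} {x y : N.X}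
    (hx : x.1 = .near e w a) (h : N.bs x y) : N.kap x.1 = N.kap y.1 := by
  obtain ⟨e', w', hy⟩ := near_rigid' hx h
  have hxv := x.2
  rw [hx] at hxv
  obtain ⟨k, hk1, hk2⟩ := TransGen.head'_iff.1 (Base.near_rec hxv)
  obtain ⟨c, _, hc1, hc2⟩ := N.hd (w a) k p.c0
  have hv : N.Valid (.frec c) := by
    show TransGen N.N.R (N.d2 c) (N.d2 c)
    rw [hc2]
    exact TransGen.tail' hk2 hk1
  obtain ⟨z, hz1, hz2⟩ := bs_forth (x' := ⟨_, hv⟩) h ⟨by rw [hx, hc2]; exact hk1, by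
    intro e2 w2 a2 h2
    rw [hx] at h2
    cases h2
    exact hc1⟩
  obtain ⟨c', hz⟩ := frec_rigid hN (x := ⟨_, hv⟩) rfl hz2
  obtain rfl := frec_eq hN (x := ⟨_, hv⟩) rfl hz hz2
  rw [hz] at hz1
  have := hz1.2 e' w' a hy
  rw [hx, hy]
  show w a = w' a
  rw [← this, hc1]

theorem bs_transGen {x y x' : N.X} (hx : TransGen N.hat.R x x') (h : N.bs x y) :
    ∃ y', TransGen N.hat.R y y' ∧ N.bs x' y' := by
  induction hx with
  | single h1 =>
    obtain ⟨y', h2, h3⟩ := bs_forth h h1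
    exact ⟨y', .single h2, h3⟩
  | tail _ h1 ih =>
    obtain ⟨z, hz1, hz2⟩ := ih
    obtain ⟨y', h2, h3⟩ := bs_forth hz2 h1
    exact ⟨y', .tail hz1 h2, h3⟩

theorem triv_rigid (hN : N.Per) {k : N.N.State} {x y : N.X} (hx : x.1 = .triv k)
    (h : N.bs x y) : ∃ k', y.1 = .triv k' := by
  cases hy : y.1 with
  | triv k' => exact ⟨k', rfl⟩
  | frec c =>
    obtain ⟨_, h2⟩ := frec_rigid hN hy (bs_symm h)
    rw [hx] at h2
    cases h2
  | near e w a =>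
    obtain ⟨_, _, h2⟩ := near_rigid' hy (bs_symm h)
    rw [hx] at h2
    cases h2

theorem hat_proj {x y : N.X} (h : TransGen N.hat.R x y) :
    TransGen N.N.R (N.kap x.1) (N.kap y.1) := by
  induction h with
  | single h => exact .single (Base.E_proj (Subtype.property _) h)
  | tail _ h ih => exact .tail ih (Base.E_proj (Subtype.property _) h)

theorem triv_no (hN : N.Per) {k : N.N.State} {x y : N.X} (hx : x.1 = .triv k)
    (h : N.bs x y) (hxy : TransGen N.hat.R x y) : False := by
  obtain ⟨π, h0, h1, h2⟩ := exists_path (R := TransGen N.hat.R)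
    {z : N.X | N.bs x z ∧ ∃ z', TransGen N.hat.R z z' ∧ N.bs z z'} (by
      rintro z ⟨hz, z', hz1, hz2⟩
      obtain ⟨z'', hz3, hz4⟩ := bs_transGen hz1 hz2
      exact ⟨z', ⟨bs_trans hz hz2, z'', hz3, hz4⟩, hz1⟩) (s := x)
    ⟨VBisim_refl _ _, y, hxy, h⟩
  have hch : ∀ d i, TransGen N.hat.R (π i) (π (i + 1 + d)) := by
    intro d
    induction d with
    | zero => intro i; exact h1 i
    | succ d ih => intro i; exact (ih i).trans (h1 _)
  have := N.finX
  have hloop : ∃ i, TransGen N.hat.R (π i) (π i) := by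
    obtain ⟨i, j, hij, he⟩ := Finite.exists_ne_map_eq_of_infinite π
    rcases lt_or_gt_of_ne hij with hl | hl
    · have := hch (j - i - 1) i
      rw [show i + 1 + (j - i - 1) = j by omega, ← he] at this
      exact ⟨i, this⟩
    · have := hch (i - j - 1) j
      rw [show j + 1 + (i - j - 1) = i by omega, he] at this
      exact ⟨j, this⟩
  obtain ⟨i, hi⟩ := hloop
  obtain ⟨k', hk'⟩ := triv_rigid hN hx (h2 i).1
  have hv := (show N.X from π i).2
  have hi := hat_proj hi
  rw [show (show N.X from π i).1 = _ from hk'] at hv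
  rw [hk'] at hi
  exact hv hi

theorem rigid (hN : N.Per) {x y : N.X} (h : N.bs x y) : N.kap x.1 = N.kap y.1 := by
  cases hx : x.1 with
  | near e w a => rw [← hx]; exact near_kap hN hx h
  | frec c =>
    obtain ⟨c', hy⟩ := frec_rigid hN hx h
    obtain rfl := frec_eq hN hx hy h
    rw [hy]
  | triv k =>
    obtain ⟨k', hy⟩ := triv_rigid hN hx h
    rw [← hx]
    by_contra hne
    rcases Base.comparable (N.kap x.1) (N.kap y.1) with hr | hr
    · rcases transGen_or_eq hr with h1 | h1
      · exact hne h1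
      · exact triv_no hN hx h (Base.reach x y h1)
    · rcases transGen_or_eq hr with h1 | h1
      · exact hne h1.symm
      · exact triv_no hN hy (bs_symm h) (Base.reach y x h1)

end

/-! ### Assembly -/

theorem exists_period {S : Type u} [Finite S] (R : S → S → Prop) :
    ∃ P : ℕ, 0 < P ∧ ∀ k, TransGen R k k → ∃ v : ℕ → S, v 0 = k ∧
      (∀ n, R (v n) (v (n + 1))) ∧ ∀ n, v (n + P) = v n := by
  classical
  have := Fintype.ofFinite S
  have h1 : ∀ k : S, ∃ n, 0 < n ∧ (TransGen R k k → ∃ v : ℕ → S, v 0 = k ∧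
      (∀ n, R (v n) (v (n + 1))) ∧ ∃ g : ℕ → S, ∀ i, v i = g (i % n)) := by
    intro k
    by_cases hk : TransGen R k k
    · obtain ⟨n, hn, v, hv0, hvn, hv⟩ := exists_cycle hk
      refine ⟨n, hn, fun _ => ⟨fun i => v (i % n), by simp [hv0], fun i => ?_, v, fun i => rfl⟩⟩
      exact cycle_periodic hn (hvn.trans hv0.symm) hv i
    · exact ⟨1, one_pos, fun h => absurd h hk⟩
  choose f hf hf' using h1
  refine ⟨∏ k, f k, Finset.prod_pos fun k _ => hf k, fun k hk => ?_⟩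
  obtain ⟨v, h0, h2, g, hg⟩ := hf' k hk
  refine ⟨v, h0, h2, fun n => ?_⟩
  obtain ⟨m, hm⟩ : f k ∣ ∏ k, f k := Finset.dvd_prod_of_mem f (Finset.mem_univ k)
  rw [hg, hg n, hm, Nat.add_mul_mod_self_left]

section
variable {Atom : Type u}

/-- Relabelling of an initial structure. -/
def relabel (K : InitKripke Atom) (l : K.State → Set Atom) : InitKripke Atom where
  State := K.State
  stateFinite := K.stateFinite
  stateNonempty := K.stateNonempty
  R := K.R
  serial := K.serial
  L := l
  s0 := K.s0
  initial := K.initial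

theorem amalgam {p : Par Atom} (N : Base p) (hN : N.Per) (K' : InitKripke Atom)
    (h : VBisim p.V2 K'.toKS N.ihat.toKS) :
    ∃ K'' : InitKripke Atom, VBisim p.V1 K'.toKS K''.toKS ∧ VBisim p.V2 K''.toKS N.N.toKS := by
  let Z : K'.State → N.X → Prop := fun s x => VBisim p.V2 ⟨K'.toKripke, s⟩ ⟨N.hat, x⟩
  have hZ : ∀ s x y, Z s x → Z s y → N.kap x.1 = N.kap y.1 := fun s x y hx hy =>
    rigid hN (VBisim_trans (VBisim_symm hx) hy)
  let l : K'.State → Set Atom := fun s =>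
    (K'.L s \ p.V1) ∪ {r | r ∈ p.V1 ∧ ∃ x, Z s x ∧ r ∈ N.N.L (N.kap x.1)}
  refine ⟨relabel K' l, ?_, ?_⟩
  · refine VBisim_of_rel (M1 := K'.toKripke) (M2 := (relabel K' l).toKripke)
      (fun s t => s = t) ?_ ?_ ?_ rfl
    · rintro s t rfl
      ext r
      show r ∈ K'.L s \ p.V1 ↔ r ∈ l s \ p.V1
      simp only [l, Set.mem_sdiff, Set.mem_union, Set.mem_ofPred_eq]
      tauto
    · rintro s t rfl s' hs
      exact ⟨s', hs, rfl⟩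
    · rintro s t rfl s' hs
      exact ⟨s', hs, rfl⟩
  · refine VBisim_of_rel (M1 := (relabel K' l).toKripke) (M2 := N.N.toKripke)
      (fun s k => ∃ x, Z s x ∧ N.kap x.1 = k) ?_ ?_ ?_ ⟨N.start, h, N.start_kap⟩
    · rintro s k ⟨x, hx, rfl⟩
      ext r
      show r ∈ l s \ p.V2 ↔ r ∈ N.N.L (N.kap x.1) \ p.V2
      have h1 := Set.ext_iff.1 (VBisim_label hx) r
      have h2 := Set.ext_iff.1 (VBisim_label (N.hat_bisim x)) r
      simp only [l, Set.mem_sdiff, Set.mem_union, Set.mem_ofPred_eq] at h1 h2 ⊢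
      have h3 : (∃ x, Z s x ∧ r ∈ N.N.L (N.kap x.1)) ↔ r ∈ N.N.L (N.kap x.1) := by
        constructor
        · rintro ⟨y, hy, hr⟩
          rw [hZ s x y hx hy]; exact hr
        · intro hr
          exact ⟨x, hx, hr⟩
      rw [h3]
      tauto
    · rintro s k ⟨x, hx, rfl⟩ s' hs
      obtain ⟨y, hy1, hy2⟩ := VBisim_forth (M1 := K'.toKripke) (M2 := N.hat) hx hs
      exact ⟨_, Base.E_proj (Subtype.property y) hy1, y, hy2, rfl⟩
    · rintro s k ⟨x, hx, rfl⟩ k' hk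
      obtain ⟨y, hy1, _, hy3, hy4⟩ := Base.E_lift x.1 hk
      obtain ⟨s', hs1, hs2⟩ := VBisim_forth (M1 := N.hat) (M2 := K'.toKripke)
        (s' := (⟨y, hy1⟩ : N.X)) (VBisim_symm hx) hy4
      exact ⟨s', hs1, ⟨y, hy1⟩, VBisim_symm hs2, hy3⟩

theorem main_dir {V1 V2 : Set Atom} {φ ψ1 ψ2 : CTL Atom}
    (h1 : IsForget φ V1 ψ1) (h2 : IsForget ψ1 V2 ψ2) {T K : InitKripke Atom}
    (hT : T ∈ CTLMod φ) (hTK : VBisim (V1 ∪ V2) T.toKS K.toKS) : K ∈ CTLMod ψ2 := by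
  have mem1 : ∀ {A B : InitKripke Atom}, A ∈ CTLMod φ → VBisim V1 A.toKS B.toKS →
      B ∈ CTLMod ψ1 := by
    intro A B hA hAB
    rw [h1.2]; exact ⟨A, hA, hAB⟩
  have mem2 : ∀ {A B : InitKripke Atom}, A ∈ CTLMod ψ1 → VBisim V2 A.toKS B.toKS →
      B ∈ CTLMod ψ2 := by
    intro A B hA hAB
    rw [h2.2]; exact ⟨A, hA, hAB⟩
  by_cases hsub : V1 ⊆ V2
  · rw [Set.union_eq_self_of_subset_left hsub] at hTK
    exact mem2 (mem1 hT (VBisim_refl _ _)) hTK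
  obtain ⟨q, hq1, hq2⟩ := Set.not_subset.1 hsub
  let C := K.State × K.State × T.State × T.State × Bool
  have finC : Finite C := inferInstance
  obtain ⟨n, ⟨eqv⟩⟩ := Finite.exists_equiv_fin C
  obtain ⟨P, hP, hper⟩ := exists_period K.R
  let p : Par Atom :=
    { V1 := V1, V2 := V2, q := q, hq1 := hq1, hq2 := hq2, C := C, finC := finC
      c0 := (K.s0, K.s0, T.s0, T.s0, true)
      num := fun e => (eqv e).1 + 1
      num_inj := fun a b hab => eqv.injective (Fin.ext (by simpa using hab))
      num_pos := fun e => by simp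
      B := n
      num_le := fun e => (eqv e).2
      P := P
      P_pos := hP
      L := n + dep ψ2 * P + P
      hBL := by rw [add_assoc]; exact Nat.le_add_right _ _
      hPL := Nat.le_add_left _ _ }
  have hbool : ∀ b : Bool, (!b) = b → False := by decide
  let NK : Base p :=
    { N := K, d1 := fun c => c.1, d2 := fun c => c.2.1
      hd := fun τ k e => ⟨(τ, k, T.s0, T.s0, !e.2.2.2.2),
        fun h => hbool _ (congrArg (fun c : C => c.2.2.2.2) h), rfl, rfl⟩ }
  let NT : Base p :=
    { N := T, d1 := fun c => c.2.2.1, d2 := fun c => c.2.2.2.1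
      hd := fun τ k e => ⟨(K.s0, K.s0, τ, k, !e.2.2.2.2),
        fun h => hbool _ (congrArg (fun c : C => c.2.2.2.2) h), rfl, rfl⟩ }
  have hNK : NK.Per := hper
  have hThat : NT.ihat ∈ CTLMod ψ2 :=
    mem2 (mem1 hT (VBisim_symm NT.ihat_bisim)) (VBisim_refl _ _)
  have hKhat : NK.ihat ∈ CTLMod ψ2 := by
    refine sat_transfer (p := p) ψ2 h2.1 (dep ψ2) le_rfl (Nat.le_add_right _ _) NT NK
      NT.start NK.start ⟨?_, .inr ⟨NT.farK_of NT.start_far, NK.farK_of NK.start_far⟩⟩ hThat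
    rw [NT.start_kap, NK.start_kap]
    exact cls_eq_iff.2 hTK
  rw [h2.2] at hKhat
  obtain ⟨K', hK', hb⟩ := hKhat
  obtain ⟨K'', hb1, hb2⟩ := amalgam NK hNK K' hb
  rw [h1.2] at hK'
  obtain ⟨K0, hK0, hb0⟩ := hK'
  exact mem2 (mem1 hK0 (VBisim_trans hb0 hb1)) hb2

end

end FC

/-- Commutativity: forgetting `V_1 ∪ V_2` equals forgetting `V_1` first and
then `V_2`. -/
theorem forget_commutativity {Atom : Type u} [Finite Atom] (φ : CTL Atom)
    (V1 V2 : Set Atom) (ψ1 ψ2 ψ : CTL Atom)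
    (h1 : IsForget φ V1 ψ1) (h2 : IsForget ψ1 V2 ψ2)
    (h : IsForget φ (V1 ∪ V2) ψ) :
    CTLEquiv ψ ψ2 := by
  refine Set.Subset.antisymm (fun K hK => ?_) (fun K hK => ?_)
  · rw [h.2] at hK
    obtain ⟨T, hT, hTK⟩ := hK
    exact FC.main_dir h1 h2 hT hTK
  · rw [h2.2] at hK
    obtain ⟨K', hK', hb⟩ := hK
    rw [h1.2] at hK'
    obtain ⟨T, hT, hb'⟩ := hK'
    rw [h.2]
    exact ⟨T, hT, FC.VBisim_trans (FC.VBisim_mono Set.subset_union_left hb')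
      (FC.VBisim_mono Set.subset_union_right hb)⟩
end
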